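/- Let k be a field and S, T totally ordered sets. Every pointwise finite-dimensional, middle exact persistence module M over the product poset S × T is isomorphic to a direct sum of block modules. -/

import Mathlib

namespace PMod

variable (k : Type) [Field k]

/-- A persistence module over a preordered set `P` with values in `k`-vector spaces. -/
structure PersistenceModule (P : Type) [Preorder P] where
  V : P → Type
  [addCommGroup : ∀ x, AddCommGroup (V x)]
  [module : ∀ x, Module k (V x)]
  map : ∀ {x y : P}, x ≤ y → (V x →ₗ[k] V y)
  map_refl : ∀ x : P, map (le_refl x) = LinearMap.id
  map_trans : ∀ {x y z : P} (hxy : x ≤ y) (hyz : y ≤ z),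
      map (le_trans hxy hyz) = (map hyz).comp (map hxy)

attribute [instance] PersistenceModule.addCommGroup PersistenceModule.module

variable {k}

/-- A morphism of persistence modules. -/
structure Hom {P : Type} [Preorder P] (M N : PersistenceModule k P) where
  app : ∀ x, M.V x →ₗ[k] N.V x
  natural : ∀ {x y : P} (h : x ≤ y), (N.map h).comp (app x) = (app y).comp (M.map h)

/-- A morphism of persistence modules is an isomorphism iff it is pointwise bijective. -/
def IsIsoHom {P : Type} [Preorder P] {M N : PersistenceModule k P} (f : Hom M N) : Prop :=
  ∀ x, Function.Bijective (f.app x)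

/-- Two persistence modules are isomorphic if there is a pointwise bijective
morphism between them. -/
def Isomorphic {P : Type} [Preorder P] (M N : PersistenceModule k P) : Prop :=
  ∃ f : Hom M N, IsIsoHom f

/-- The direct sum of a family of persistence modules, taken pointwise
(`Π₀` is the finitely supported product, i.e. the direct sum). -/
noncomputable def directSum {P : Type} [Preorder P] {ι : Type}
    (N : ι → PersistenceModule k P) : PersistenceModule k P where
  V x := Π₀ i, (N i).V x
  map {x y} h := DFinsupp.mapRange.linearMap (fun i => (N i).map h)
  map_refl x := by
    have h : (fun i => (N i).map (le_refl x)) =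
        fun i => (LinearMap.id : (N i).V x →ₗ[k] (N i).V x) :=
      funext fun i => (N i).map_refl x
    rw [h]
    exact DFinsupp.mapRange.linearMap_id
  map_trans {x y z} hxy hyz := by
    have h : (fun i => (N i).map (le_trans hxy hyz)) =
        fun i => ((N i).map hyz).comp ((N i).map hxy) :=
      funext fun i => (N i).map_trans hxy hyz
    rw [h]
    exact DFinsupp.mapRange.linearMap_comp _ _

/-- The binary direct sum of two persistence modules, taken pointwise. -/
def sum2 {P : Type} [Preorder P] (M N : PersistenceModule k P) : PersistenceModule k P where
  V x := M.V x × N.V x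
  map h := (M.map h).prodMap (N.map h)
  map_refl x := by
    rw [M.map_refl, N.map_refl]
    exact LinearMap.prodMap_id
  map_trans hxy hyz := by
    rw [M.map_trans hxy hyz, N.map_trans hxy hyz]
    exact (LinearMap.prodMap_comp _ _ _ _).symm

/-- The zero persistence module predicate. -/
def IsZero {P : Type} [Preorder P] (M : PersistenceModule k P) : Prop :=
  ∀ x, ∀ v : M.V x, v = 0

/-- A persistence module is indecomposable if it is nonzero and whenever it is
isomorphic to a direct sum of two modules, one of the summands is zero. -/
def Indecomposable {P : Type} [Preorder P] (M : PersistenceModule k P) : Prop :=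
  ¬ IsZero M ∧ ∀ M' M'' : PersistenceModule k P,
    Isomorphic M (sum2 M' M'') → IsZero M' ∨ IsZero M''

variable (k)

/-- A subset of a preordered set is convex. -/
def IsConvex {P : Type} [Preorder P] (I : Set P) : Prop :=
  ∀ p q r : P, p ≤ q → q ≤ r → p ∈ I → r ∈ I → q ∈ I

open Classical in
/-- The fibre of the interval module `k_I` at `x`: a copy of `k` if `x ∈ I`, else `0`. -/
noncomputable def kMod {P : Type} [Preorder P] (I : Set P) (x : P) : Submodule k k :=
  if x ∈ I then ⊤ else ⊥

/-- The canonical generator of the fibre of the interval module at a point of `I`. -/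
noncomputable def kGen {P : Type} [Preorder P] {I : Set P} {x : P} (hx : x ∈ I) :
    kMod k I x :=
  ⟨1, by simp [kMod, hx]⟩

open Classical in
/-- The structure maps of the interval module. -/
noncomputable def intervalMap {P : Type} [Preorder P] (I : Set P) {x y : P} (_ : x ≤ y) :
    kMod k I x →ₗ[k] kMod k I y where
  toFun m := if hy : y ∈ I then ⟨(m : k), by simp [kMod, hy]⟩ else 0
  map_add' a b := by
    by_cases hy : y ∈ I <;> simp [hy]
  map_smul' c a := by
    by_cases hy : y ∈ I <;> simp [hy]

theorem kMod_coe_eq_zero {P : Type} [Preorder P] {I : Set P} {x : P} (hx : x ∉ I)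
    (m : kMod k I x) : (m : k) = 0 := by
  have hm := m.2
  simp only [kMod, if_neg hx, Submodule.mem_bot] at hm
  exact hm

/-- The interval module `k_I` of a convex subset `I ⊆ P`: one-dimensional with
identity structure maps on `I`, and zero outside of `I`. -/
noncomputable def intervalModule {P : Type} [Preorder P] (I : Set P) (hI : IsConvex I) :
    PersistenceModule k P where
  V x := kMod k I x
  map h := intervalMap k I h
  map_refl x := by
    ext m
    by_cases hx : x ∈ I
    · simp [intervalMap, hx]
    · simp [intervalMap, hx, kMod_coe_eq_zero k hx m]
  map_trans {x y z} hxy hyz := by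
    ext m
    by_cases hz : z ∈ I
    · by_cases hy : y ∈ I
      · simp [intervalMap, hz, hy]
      · have hx : x ∉ I := fun hx => hy (hI x y z hxy hyz hx hz)
        simp [intervalMap, hz, hy, kMod_coe_eq_zero k hx m]
    · by_cases hy : y ∈ I <;> simp [intervalMap, hz, hy]

/-- The constant persistence module `k_P` with value `k` everywhere. -/
def constModule (P : Type) [Preorder P] : PersistenceModule k P where
  V _ := k
  map _ := LinearMap.id
  map_refl _ := rfl
  map_trans _ _ := rfl

variable {k}

/-- Connectedness of a subset of a preordered set: any two points are joined by
a finite zigzag of comparable points inside the subset. -/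
def IsConn {P : Type} [Preorder P] (I : Set P) : Prop :=
  ∀ p ∈ I, ∀ q ∈ I, ∃ (n : ℕ) (r : ℕ → P), r 0 = p ∧ r n = q ∧ (∀ i ≤ n, r i ∈ I) ∧
    ∀ i < n, r i ≤ r (i + 1) ∨ r (i + 1) ≤ r i

/-- An interval in a poset: a nonempty convex connected subset. -/
def IsInterval {P : Type} [Preorder P] (I : Set P) : Prop :=
  I.Nonempty ∧ IsConvex I ∧ IsConn I

/-- An ideal: a subset closed under going down. -/
def IsIdeal {P : Type} [Preorder P] (I : Set P) : Prop :=
  ∀ p q : P, p ≤ q → q ∈ I → p ∈ I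

/-- A filter: a subset closed under going up. -/
def IsFilter {P : Type} [Preorder P] (I : Set P) : Prop :=
  ∀ p q : P, p ≤ q → p ∈ I → q ∈ I

/-- An interval in a totally ordered set: a nonempty convex subset. -/
def IsIntervalLin {P : Type} [Preorder P] (I : Set P) : Prop :=
  I.Nonempty ∧ IsConvex I

theorem IsConvex.prod {S T : Type} [Preorder S] [Preorder T] {A : Set S} {B : Set T}
    (hA : IsConvex A) (hB : IsConvex B) : IsConvex (A ×ˢ B) := by
  intro p q r hpq hqr hp hr
  exact ⟨hA _ _ _ hpq.1 hqr.1 hp.1 hr.1, hB _ _ _ hpq.2 hqr.2 hp.2 hr.2⟩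

theorem isConvex_univ {P : Type} [Preorder P] : IsConvex (Set.univ : Set P) :=
  fun _ _ _ _ _ _ _ => trivial

/-- A block in the product of two totally ordered sets. -/
def IsBlock {S T : Type} [LinearOrder S] [LinearOrder T] (I : Set (S × T)) : Prop :=
  I.Nonempty ∧ (
    (∃ JS JT, IsIntervalLin JS ∧ IsIdeal JS ∧ IsIntervalLin JT ∧ IsIdeal JT ∧ I = JS ×ˢ JT) ∨
    (∃ JS JT, IsIntervalLin JS ∧ IsFilter JS ∧ IsIntervalLin JT ∧ IsFilter JT ∧ I = JS ×ˢ JT) ∨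
    (∃ JS, IsIntervalLin JS ∧ I = JS ×ˢ (Set.univ : Set T)) ∨
    (∃ JT, IsIntervalLin JT ∧ I = (Set.univ : Set S) ×ˢ JT))

theorem IsBlock.isConvex {S T : Type} [LinearOrder S] [LinearOrder T] {I : Set (S × T)}
    (h : IsBlock I) : IsConvex I := by
  obtain ⟨-, h | h | h | h⟩ := h
  · obtain ⟨JS, JT, hS, -, hT, -, rfl⟩ := h
    exact hS.2.prod hT.2
  · obtain ⟨JS, JT, hS, -, hT, -, rfl⟩ := h
    exact hS.2.prod hT.2
  · obtain ⟨JS, hS, rfl⟩ := h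
    exact hS.2.prod isConvex_univ
  · obtain ⟨JT, hT, rfl⟩ := h
    exact isConvex_univ.prod hT.2

/-- Convexity is inherited by preimages in a subposet. -/
theorem IsConvex.preimage {P : Type} [Preorder P] {J : Set P} (hJ : IsConvex J)
    (Q : Set P) : IsConvex {p : Q | (p : P) ∈ J} :=
  fun p q r hpq hqr hp hr => hJ p q r hpq hqr hp hr

/-- The restriction of a persistence module to a subposet. -/
def restrict {P : Type} [Preorder P] (M : PersistenceModule k P) (Q : Set P) :
    PersistenceModule k Q where
  V q := M.V q
  map h := M.map h
  map_refl q := M.map_refl q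
  map_trans hxy hyz := M.map_trans hxy hyz

/-- Middle exactness for persistence modules over a product of two totally ordered sets:
for every rectangle `a = (x,y) ≤ b = (x,y'), c = (x',y) ≤ d = (x',y')` the sequence
`M_a → M_b ⊕ M_c → M_d` is exact at `M_b ⊕ M_c`. -/
def MiddleExact {S T : Type} [Preorder S] [Preorder T]
    (M : PersistenceModule k (S × T)) : Prop :=
  ∀ (x x' : S) (y y' : T) (hx : x ≤ x') (hy : y ≤ y')
    (mb : M.V (x, y')) (mc : M.V (x', y)),
    M.map (show (x, y') ≤ (x', y') from ⟨hx, le_refl y'⟩) mb =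
      M.map (show (x', y) ≤ (x', y') from ⟨le_refl x', hy⟩) mc →
    ∃ ma : M.V (x, y),
      M.map (show (x, y) ≤ (x, y') from ⟨le_refl x, hy⟩) ma = mb ∧
      M.map (show (x, y) ≤ (x', y) from ⟨hx, le_refl y⟩) ma = mc


theorem IsIdeal.isConvex {P : Type} [Preorder P] {I : Set P} (h : IsIdeal I) : IsConvex I :=
  fun _ q r _ hqr _ hr => h q r hqr hr

theorem IsFilter.isConvex {P : Type} [Preorder P] {I : Set P} (h : IsFilter I) : IsConvex I :=
  fun p q _ hpq _ hp _ => h p q hpq hp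


/-- Convexity of the preimage of a convex subset of `T` in a subposet of `S × T`. -/
theorem IsConvex.preimageSnd {S T : Type} [Preorder S] [Preorder T] {J : Set T}
    (hJ : IsConvex J) (Q : Set (S × T)) : IsConvex {p : ↥Q | (p : S × T).2 ∈ J} :=
  fun p q r hpq hqr hp hr =>
    hJ _ _ _ (Subtype.coe_le_coe.mpr hpq).2 (Subtype.coe_le_coe.mpr hqr).2 hp hr

end PMod

/-!
A pointwise finite-dimensional module splits off the interval module of `F ∩ D`, for `F` a
codirected filter and `D` a directed ideal, as soon as some element `m` lifts to all earlier points
of `F` by elements that die outside `D`, and stays outside the span of the elements born outside `F`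
at all later points of `D`: the lifts can be chosen compatibly over `F`, a functional with value `1`
at `m` can be chosen compatibly over `D`, and together they give an inclusion and a retraction.

In a nonzero middle exact module such an `m` always exists. If some nonzero element dies both to the
right and upwards, the shortest-lived one among these generates a block that is a product of ideals.
If instead some element dies in one direction only, or none dies but some element has ancestors
arbitrarily far back in one direction, middle exactness spreads it over a whole band. In the
remaining case an incoming horizontal and an incoming vertical map vanish, and the dual module falls
under the first case, which yields a product of filters.

Finally, middle exactness passes to direct summands, so the remainder of a maximal family of block
summands vanishes. Zorn's lemma applies because along a chain of such families the remainders become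
stationary at each point, by finite-dimensionality.
-/

namespace PMod

variable {k : Type} [Field k]

section Submodules

variable {P : Type} [Preorder P] (M : PersistenceModule k P)

theorem PersistenceModule.map_map {x y z : P} (hxy : x ≤ y) (hyz : y ≤ z) (v : M.V x) :
    M.map hyz (M.map hxy v) = M.map (hxy.trans hyz) v := by
  rw [M.map_trans hxy hyz, LinearMap.comp_apply]

theorem PersistenceModule.map_self {x : P} (h : x ≤ x) (v : M.V x) : M.map h v = v := by
  rw [M.map_refl, LinearMap.id_apply]

instance (M : PersistenceModule k P) : DirectedSystem M.V fun _ _ h => M.map h where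
  map_self _ := M.map_self _
  map_map _ _ _ hij hjl := M.map_map hij hjl

/-- A submodule of a persistence module: a family of subspaces of the fibres that is stable under
the structure maps. -/
structure PersistenceSubmodule (M : PersistenceModule k P) where
  carrier : ∀ x, Submodule k (M.V x)
  map_mem : ∀ {x y : P} (h : x ≤ y) {w : M.V x}, w ∈ carrier x → M.map h w ∈ carrier y

variable {M}

/-- A submodule, regarded as a persistence module in its own right. -/
def PersistenceSubmodule.toModule (N : PersistenceSubmodule M) : PersistenceModule k P where
  V x := N.carrier x
  map h := (M.map h).restrict fun _ => N.map_mem h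
  map_refl _ := LinearMap.ext fun _ => Subtype.ext (M.map_self _ _)
  map_trans hxy hyz := LinearMap.ext fun _ => Subtype.ext (M.map_map hxy hyz _).symm

/-- The quotient of a persistence module by a submodule. -/
def PersistenceSubmodule.quotient (N : PersistenceSubmodule M) : PersistenceModule k P where
  V x := M.V x ⧸ N.carrier x
  map {x y} h := (N.carrier x).mapQ (N.carrier y) (M.map h) fun _ => N.map_mem h
  map_refl _ := Submodule.linearMap_qext _ <| LinearMap.ext fun _ =>
    congrArg _ (M.map_self _ _)
  map_trans hxy hyz := Submodule.linearMap_qext _ <| LinearMap.ext fun _ =>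
    congrArg _ (M.map_map hxy hyz _).symm

variable (M)

/-- The elements of `M` that die outside `D`. -/
def PersistenceModule.kerOutside (D : Set P) : PersistenceSubmodule M where
  carrier x := ⨅ (z) (h : x ≤ z) (_ : z ∉ D), LinearMap.ker (M.map h)
  map_mem {x y} h w hw := by
    simp only [Submodule.mem_iInf, LinearMap.mem_ker] at hw ⊢
    intro z hz hzD
    rw [M.map_map, hw z _ hzD]

/-- The submodule of `M` generated by the elements born outside `F`. -/
def PersistenceModule.rangeOutside (F : Set P) : PersistenceSubmodule M where
  carrier y := ⨆ (x) (h : x ≤ y) (_ : x ∉ F), LinearMap.range (M.map h)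
  map_mem {x y} h w hw := by
    refine (iSup_le fun z => iSup_le fun hz => iSup_le fun hzF => ?_ :
      _ ≤ (⨆ (z) (h : z ≤ y) (_ : z ∉ F), LinearMap.range (M.map h)).comap (M.map h)) hw
    rintro _ ⟨w, rfl⟩
    rw [Submodule.mem_comap, M.map_map]
    exact Submodule.mem_iSup_of_mem z <| Submodule.mem_iSup_of_mem (hz.trans h) <|
      Submodule.mem_iSup_of_mem hzF ⟨w, rfl⟩

variable {M}

theorem PersistenceModule.mem_kerOutside {D : Set P} {x : P} {w : M.V x} :
    w ∈ (M.kerOutside D).carrier x ↔ ∀ z (h : x ≤ z), z ∉ D → M.map h w = 0 := by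
  simp only [kerOutside, Submodule.mem_iInf, LinearMap.mem_ker]

theorem PersistenceModule.map_mem_rangeOutside {F : Set P} {x y : P} (h : x ≤ y) (hx : x ∉ F)
    (w : M.V x) : M.map h w ∈ (M.rangeOutside F).carrier y :=
  Submodule.mem_iSup_of_mem x <| Submodule.mem_iSup_of_mem h <|
    Submodule.mem_iSup_of_mem hx ⟨w, rfl⟩

theorem rangeOutside_univ (M : PersistenceModule k P) (x : P) :
    (M.rangeOutside Set.univ).carrier x = ⊥ := by
  simp [PersistenceModule.rangeOutside]

end Submodules

section CompatibleFamilies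

variable {Q : Type} [Preorder Q] (G : PersistenceModule k Q)

/-- The pointwise dual of `M`, a persistence module over the opposite order. -/
def PersistenceModule.dual : PersistenceModule k Qᵒᵈ where
  V x := Module.Dual k (G.V (OrderDual.ofDual x))
  map h := (G.map (OrderDual.ofDual_le_ofDual.2 h)).dualMap
  map_refl _ := LinearMap.ext fun f => LinearMap.ext fun w => congrArg f (G.map_self _ w)
  map_trans hxy hyz := LinearMap.ext fun f => LinearMap.ext fun w =>
    congrArg f <| .symm <|
      G.map_map (OrderDual.ofDual_le_ofDual.2 hyz) (OrderDual.ofDual_le_ofDual.2 hxy) w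

theorem exists_functional_of_forall_ker_le [IsDirectedOrder Q] {p : Q} (f : Module.Dual k (G.V p))
    (hf : ∀ q (h : p ≤ q) w, G.map h w = 0 → f w = 0) :
    ∃ φ : ∀ q, Module.Dual k (G.V q), φ p = f ∧
      ∀ i j (h : i ≤ j) w, φ j (G.map h w) = φ i w := by
  classical
  have : Nonempty Q := ⟨p⟩
  let of (q : Q) := Module.DirectLimit.of k Q G.V (fun _ _ h => G.map h) q
  have f_mem_range : f ∈ LinearMap.range (of p).dualMap := by
    rw [LinearMap.range_dualMap_eq_dualAnnihilator_ker, Submodule.mem_dualAnnihilator]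
    intro w hw
    obtain ⟨q, hq, hqw⟩ := Module.DirectLimit.of.zero_exact (LinearMap.mem_ker.1 hw)
    exact hf q hq w hqw
  obtain ⟨Φ, hΦ⟩ := f_mem_range
  exact ⟨fun q => Φ ∘ₗ of q, hΦ, fun i j h w => congrArg Φ Module.DirectLimit.of_f⟩

theorem exists_functional_apply_eq_one [IsDirectedOrder Q] {p : Q} {m : G.V p}
    (hm : ∀ q (h : p ≤ q), G.map h m ≠ 0) :
    ∃ φ : ∀ q, Module.Dual k (G.V q), φ p m = 1 ∧
      ∀ i j (h : i ≤ j) w, φ j (G.map h w) = φ i w := by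
  classical
  have : Nonempty Q := ⟨p⟩
  let of (q : Q) := Module.DirectLimit.of k Q G.V (fun _ _ h => G.map h) q
  have of_ne_zero : of p m ≠ 0 := fun h =>
    let ⟨q, hq, hqm⟩ := Module.DirectLimit.of.zero_exact h
    hm q hq hqm
  obtain ⟨Φ, hΦ⟩ := Module.Projective.exists_dual_eq_one k of_ne_zero
  exact ⟨fun q => Φ ∘ₗ of q, hΦ, fun i j h w => congrArg Φ Module.DirectLimit.of_f⟩

-- A section is a functional on the dual module that is compatible over the opposite order.
theorem exists_section_of_forall_mem_range [IsCodirectedOrder Q]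
    [∀ q, FiniteDimensional k (G.V q)] {p : Q} (m : G.V p)
    (hm : ∀ q (h : q ≤ p), m ∈ LinearMap.range (G.map h)) :
    ∃ v : ∀ q, G.V q, v p = m ∧ ∀ i j (h : i ≤ j), G.map h (v i) = v j := by
  obtain ⟨ψ, hψp, hψ⟩ : ∃ ψ : ∀ q, Module.Dual k (Module.Dual k (G.V q)),
      ψ p = Module.Dual.eval k (G.V p) m ∧
        ∀ i j (h : i ≤ j) f, ψ i ((G.map h).dualMap f) = ψ j f := by
    obtain ⟨ψ, hψp, hψ⟩ := exists_functional_of_forall_ker_le G.dual (p := OrderDual.toDual p)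
      (Module.Dual.eval k (G.V p) m) fun q h f hf => by
        obtain ⟨w, rfl⟩ := hm (OrderDual.ofDual q) h
        exact LinearMap.congr_fun hf w
    exact ⟨fun q => ψ (OrderDual.toDual q), hψp, fun i j h =>
      hψ (OrderDual.toDual j) (OrderDual.toDual i) h⟩
  choose v hv using fun q => (Module.evalEquiv k (G.V q)).surjective (ψ q)
  refine ⟨v, (Module.evalEquiv k (G.V p)).injective ((hv p).trans hψp), fun i j h =>
    (Module.evalEquiv k (G.V j)).injective (LinearMap.ext fun f => ?_)⟩
  calc
    Module.evalEquiv k (G.V j) (G.map h (v i)) f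
      = Module.evalEquiv k (G.V i) (v i) ((G.map h).dualMap f) := rfl
    _ = Module.evalEquiv k (G.V j) (v j) f := by rw [hv, hv, hψ]

end CompatibleFamilies

section IntervalSummands

variable {P : Type} [Preorder P] {M : PersistenceModule k P}

/-- `v` generates a copy of the interval module `k_J` inside `M`, and `φ` gives the coordinates of
a retraction of `M` onto it. -/
structure IsIntervalSplitting (M : PersistenceModule k P) (J : Set P) (v : ∀ x, M.V x)
    (φ : ∀ x, Module.Dual k (M.V x)) : Prop where
  gen_eq_zero : ∀ x, x ∉ J → v x = 0
  coord_eq_zero : ∀ x, x ∉ J → φ x = 0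
  coord_gen : ∀ x ∈ J, φ x (v x) = 1
  map_gen : ∀ {x y : P} (h : x ≤ y), x ∈ J → M.map h (v x) = v y
  coord_map : ∀ {x y : P} (h : x ≤ y), y ∈ J → ∀ w, φ y (M.map h w) = φ x w

/-- `M` has a direct summand isomorphic to the interval module `k_J`. -/
def HasIntervalSummand (M : PersistenceModule k P) (J : Set P) : Prop :=
  ∃ v φ, IsIntervalSplitting M J v φ

open Classical in
theorem exists_section_of_directedOn [∀ x, FiniteDimensional k (M.V x)] {D F : Set P}
    (F_codirected : DirectedOn (· ≥ ·) F) {p : P} (hpF : p ∈ F) {m : M.V p}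
    (hm : ∀ x (h : x ≤ p), x ∈ F → ∃ w ∈ (M.kerOutside D).carrier x, M.map h w = m) :
    ∃ v : ∀ x, M.V x, v p = m ∧ (∀ x, x ∉ F ∩ D → v x = 0) ∧
      ∀ x y (h : x ≤ y), x ∈ F → y ∈ F → M.map h (v x) = v y := by
  have : IsCodirectedOrder F := ⟨fun x y =>
    let ⟨z, hz, hzx, hzy⟩ := F_codirected x x.2 y y.2
    ⟨⟨z, hz⟩, hzx, hzy⟩⟩
  let N := M.kerOutside D
  have (q : F) : FiniteDimensional k ((restrict N.toModule F).V q) :=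
    inferInstanceAs (FiniteDimensional k (N.carrier q))
  have m_mem : m ∈ N.carrier p := by
    obtain ⟨w, hw, rfl⟩ := hm p le_rfl hpF
    exact N.map_mem le_rfl hw
  obtain ⟨u, hu_p, hu⟩ := exists_section_of_forall_mem_range (restrict N.toModule F)
    (p := ⟨p, hpF⟩) ⟨m, m_mem⟩ fun q h =>
      let ⟨w, hw, hwm⟩ := hm q h q.2
      ⟨⟨w, hw⟩, Subtype.ext hwm⟩
  let v (x : P) : M.V x := if hx : x ∈ F then (N.carrier x).subtype (u ⟨x, hx⟩) else 0
  have v_of_mem {x : P} (hx : x ∈ F) : v x = (N.carrier x).subtype (u ⟨x, hx⟩) := dif_pos hx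
  refine ⟨v, ?_, fun x hx => ?_, fun x y h hx hy => ?_⟩
  · rw [v_of_mem hpF, hu_p]
    rfl
  · by_cases hxF : x ∈ F
    · have v_mem : v x ∈ N.carrier x := v_of_mem hxF ▸ (u ⟨x, hxF⟩).2
      rw [← M.map_self le_rfl (v x)]
      exact PersistenceModule.mem_kerOutside.1 v_mem x le_rfl fun hxD => hx ⟨hxF, hxD⟩
    · exact dif_neg hxF
  · rw [v_of_mem hx, v_of_mem hy]
    exact congrArg (N.carrier y).subtype (hu ⟨x, hx⟩ ⟨y, hy⟩ h)

open Classical in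
theorem exists_functional_of_directedOn {D F : Set P} (D_directed : DirectedOn (· ≤ ·) D) {p : P}
    (hpD : p ∈ D) {m : M.V p}
    (hm : ∀ y (h : p ≤ y), y ∈ D → M.map h m ∉ (M.rangeOutside F).carrier y) :
    ∃ φ : ∀ x, Module.Dual k (M.V x), φ p m = 1 ∧ (∀ x, x ∉ F ∩ D → φ x = 0) ∧
      ∀ x y (h : x ≤ y), x ∈ D → y ∈ D → ∀ w, φ y (M.map h w) = φ x w := by
  have : IsDirectedOrder D := ⟨fun x y =>
    let ⟨z, hz, hxz, hyz⟩ := D_directed x x.2 y y.2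
    ⟨⟨z, hz⟩, hxz, hyz⟩⟩
  let N := M.rangeOutside F
  obtain ⟨ψ, hψ_p, hψ⟩ := exists_functional_apply_eq_one (restrict N.quotient D) (p := ⟨p, hpD⟩)
    (m := (N.carrier p).mkQ m) fun q h hq =>
      hm q h q.2 ((Submodule.Quotient.mk_eq_zero _).1 hq)
  let φ (x : P) : Module.Dual k (M.V x) := if hx : x ∈ D then ψ ⟨x, hx⟩ ∘ₗ (N.carrier x).mkQ else 0
  have φ_of_mem {x : P} (hx : x ∈ D) : φ x = ψ ⟨x, hx⟩ ∘ₗ (N.carrier x).mkQ := dif_pos hx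
  refine ⟨φ, ?_, fun x hx => ?_, fun x y h hx hy w => ?_⟩
  · rw [φ_of_mem hpD]
    exact hψ_p
  · by_cases hxD : x ∈ D
    · ext w
      have w_mem : w ∈ N.carrier x := M.map_self le_rfl w ▸
        PersistenceModule.map_mem_rangeOutside le_rfl (fun hxF => hx ⟨hxF, hxD⟩) w
      rw [φ_of_mem hxD]
      exact (congrArg (ψ ⟨x, hxD⟩) ((Submodule.Quotient.mk_eq_zero _).2 w_mem)).trans (map_zero _)
    · exact dif_neg hxD
  · rw [φ_of_mem hx, φ_of_mem hy]
    exact hψ ⟨x, hx⟩ ⟨y, hy⟩ h ((N.carrier x).mkQ w)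

theorem hasIntervalSummand_inter [∀ x, FiniteDimensional k (M.V x)] {D F : Set P}
    (hD : IsIdeal D) (hF : IsFilter F) (D_directed : DirectedOn (· ≤ ·) D)
    (F_codirected : DirectedOn (· ≥ ·) F) {p : P} (hpF : p ∈ F) (hpD : p ∈ D) {m : M.V p}
    (lift : ∀ x (h : x ≤ p), x ∈ F → ∃ w ∈ (M.kerOutside D).carrier x, M.map h w = m)
    (persist : ∀ y (h : p ≤ y), y ∈ D → M.map h m ∉ (M.rangeOutside F).carrier y) :
    HasIntervalSummand M (F ∩ D) := by
  obtain ⟨v, hv_p, v_eq_zero, hv⟩ := exists_section_of_directedOn F_codirected hpF lift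
  obtain ⟨φ, hφ_p, φ_eq_zero, hφ⟩ := exists_functional_of_directedOn D_directed hpD persist
  refine ⟨v, φ, v_eq_zero, φ_eq_zero, fun x hx => ?_, fun {x y} h hx => ?_, fun {x y} h hy w => ?_⟩
  · obtain ⟨y, hyD, hxy, hpy⟩ := D_directed x hx.2 p hpD
    have hyF : y ∈ F := hF p y hpy hpF
    calc φ x (v x) = φ y (v y) := by rw [← hv x y hxy hx.1 hyF, hφ x y hxy hx.2 hyD]
      _ = 1 := by rw [← hv p y hpy hpF hyF, hφ p y hpy hpD hyD, hv_p, hφ_p]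
  · exact hv x y h hx.1 (hF x y h hx.1)
  · exact hφ x y h (hD x y h hy.2) hy.2 w

/-- The pullback of a persistence module along a monotone map. -/
abbrev PersistenceModule.comap {Q : Type} [Preorder Q] (N : PersistenceModule k Q) {f : P → Q}
    (hf : Monotone f) : PersistenceModule k P where
  V x := N.V (f x)
  map h := N.map (hf h)
  map_refl x := N.map_refl (f x)
  map_trans hxy hyz := N.map_trans (hf hxy) (hf hyz)

theorem HasIntervalSummand.of_comap {Q : Type} [Preorder Q] (e : P ≃o Q)
    {N : PersistenceModule k Q} {J : Set P} (h : HasIntervalSummand (N.comap e.monotone) J) :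
    HasIntervalSummand N (e.symm ⁻¹' J) := by
  obtain ⟨v, φ, hvφ⟩ := h
  have v_eq {x y : P} (hxy : x ≤ y) (hx : x ∈ J) : N.map (e.monotone hxy) (v x) = v y :=
    hvφ.map_gen hxy hx
  have φ_eq {x y : P} (hxy : x ≤ y) (hy : y ∈ J) (w : N.V (e x)) :
      φ y (N.map (e.monotone hxy) w) = φ x w := hvφ.coord_map hxy hy w
  refine ⟨fun y => N.map (e.apply_symm_apply y).le (v (e.symm y)),
    fun y => φ (e.symm y) ∘ₗ N.map (e.apply_symm_apply y).ge, ?_, ?_, ?_, ?_, ?_⟩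
  · intro y hy
    rw [hvφ.gen_eq_zero _ hy]
    exact map_zero _
  · intro y hy
    rw [hvφ.coord_eq_zero _ hy]
    exact LinearMap.zero_comp _
  · intro y hy
    rw [LinearMap.comp_apply, N.map_map, N.map_self]
    exact hvφ.coord_gen _ hy
  · intro x y hxy hx
    rw [N.map_map, ← v_eq (e.symm.monotone hxy) hx, N.map_map]
  · intro x y hxy hy w
    rw [LinearMap.comp_apply, LinearMap.comp_apply, ← φ_eq (e.symm.monotone hxy) hy, N.map_map,
      N.map_map]

theorem HasIntervalSummand.of_dual [∀ x, FiniteDimensional k (M.V x)] {J : Set Pᵒᵈ}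
    (h : HasIntervalSummand M.dual J) : HasIntervalSummand M (OrderDual.toDual ⁻¹' J) := by
  obtain ⟨f, ψ, hfψ⟩ := h
  let φ (x : P) : Module.Dual k (M.V x) := f (OrderDual.toDual x)
  choose v hv using fun x => (Module.evalEquiv k (M.V x)).surjective (ψ (OrderDual.toDual x))
  have apply_v (x : P) (g : Module.Dual k (M.V x)) : g (v x) = ψ (OrderDual.toDual x) g :=
    LinearMap.congr_fun (hv x) g
  refine ⟨v, φ, ?_, ?_, ?_, ?_, ?_⟩
  · intro x hx
    refine (Module.evalEquiv k (M.V x)).injective ((hv x).trans ?_)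
    rw [map_zero]
    exact hfψ.coord_eq_zero _ hx
  · exact fun x hx => hfψ.gen_eq_zero _ hx
  · exact fun x hx => (apply_v x (φ x)).trans (hfψ.coord_gen _ hx)
  · intro x y h hx
    refine (Module.evalEquiv k (M.V y)).injective (LinearMap.ext fun g => ?_)
    calc g (M.map h (v x)) = ψ (OrderDual.toDual x) ((M.map h).dualMap g) :=
        apply_v x ((M.map h).dualMap g)
      _ = ψ (OrderDual.toDual y) g := hfψ.coord_map (OrderDual.toDual_le_toDual.2 h) hx g
      _ = g (v y) := (apply_v y g).symm
  · exact fun {x y} h hy w => LinearMap.congr_fun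
      (hfψ.map_gen (OrderDual.toDual_le_toDual.2 h) hy) w

end IntervalSummands

section OneParameter

variable {S : Type}

section Preorder

variable [Preorder S] (R : PersistenceModule k S) {s : S}

/-- The parameters at which `m` has not yet died. -/
def PersistenceModule.lifespan (m : R.V s) : Set S := {x | ∀ h : s ≤ x, R.map h m ≠ 0}

/-- The parameters from which `m` descends, including all those that are not below its own. -/
def PersistenceModule.ancestry (m : R.V s) : Set S :=
  {x | ∀ h : x ≤ s, m ∈ LinearMap.range (R.map h)}

variable {R} {m : R.V s}

theorem self_mem_lifespan (hm : m ≠ 0) : s ∈ R.lifespan m := fun h => by rwa [R.map_self h]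

theorem isIdeal_lifespan : IsIdeal (R.lifespan m) := fun x y hxy hy h hx =>
  hy (h.trans hxy) (by rw [← R.map_map h hxy, hx, map_zero])

theorem notMem_lifespan_iff {x : S} : x ∉ R.lifespan m ↔ ∃ h : s ≤ x, R.map h m = 0 := by
  simp only [PersistenceModule.lifespan, Set.mem_ofPred_eq, not_forall, not_not]

theorem mem_kerOutside_lifespan : m ∈ (R.kerOutside (R.lifespan m)).carrier s :=
  PersistenceModule.mem_kerOutside.2 fun _ _ hz => (notMem_lifespan_iff.1 hz).2

theorem self_mem_ancestry : s ∈ R.ancestry m := fun h => ⟨m, R.map_self h m⟩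

theorem isFilter_ancestry : IsFilter (R.ancestry m) := fun x y hxy hx h => by
  obtain ⟨w, rfl⟩ := hx (hxy.trans h)
  exact ⟨R.map hxy w, R.map_map hxy h w⟩

theorem notMem_ancestry_iff {x : S} :
    x ∉ R.ancestry m ↔ ∃ h : x ≤ s, m ∉ LinearMap.range (R.map h) := by
  simp only [PersistenceModule.ancestry, Set.mem_ofPred_eq, not_forall]

theorem PersistenceModule.ker_map_mono {x y z : S} (hxy : x ≤ y) (hyz : y ≤ z) :
    LinearMap.ker (R.map hxy) ≤ LinearMap.ker (R.map (hxy.trans hyz)) := by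
  rw [R.map_trans hxy hyz]
  exact LinearMap.ker_le_ker_comp _ _

theorem PersistenceModule.range_map_mono {x y z : S} (hxy : x ≤ y) (hyz : y ≤ z) :
    LinearMap.range (R.map (hxy.trans hyz)) ≤ LinearMap.range (R.map hyz) := by
  rw [R.map_trans hxy hyz]
  exact LinearMap.range_comp_le_range _ _

end Preorder

variable [LinearOrder S] {R : PersistenceModule k S} {s : S}

theorem ker_map_total (R : PersistenceModule k S) {x y z : S} (hxy : x ≤ y) (hxz : x ≤ z) :
    LinearMap.ker (R.map hxy) ≤ LinearMap.ker (R.map hxz) ∨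
      LinearMap.ker (R.map hxz) ≤ LinearMap.ker (R.map hxy) :=
  (le_total y z).imp (PersistenceModule.ker_map_mono hxy) (PersistenceModule.ker_map_mono hxz)

theorem range_map_total (R : PersistenceModule k S) {x y z : S} (hxz : x ≤ z) (hyz : y ≤ z) :
    LinearMap.range (R.map hxz) ≤ LinearMap.range (R.map hyz) ∨
      LinearMap.range (R.map hyz) ≤ LinearMap.range (R.map hxz) :=
  (le_total x y).imp (fun h => PersistenceModule.range_map_mono h hyz)
    fun h => PersistenceModule.range_map_mono h hxz

theorem mem_kerOutside_of_map_mem {D : Set S} (hD : IsIdeal D) {x : S} (hs : s ∈ D) (h : x ≤ s)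
    {w : R.V x} (hw : R.map h w ∈ (R.kerOutside D).carrier s) :
    w ∈ (R.kerOutside D).carrier x := by
  rw [PersistenceModule.mem_kerOutside] at hw ⊢
  intro z _ hz
  have hsz : s ≤ z := le_of_not_ge fun hzs => hz (hD z s hzs hs)
  rw [← R.map_map h hsz, hw z hsz hz]

theorem exists_shortestLived [FiniteDimensional k (R.V s)] {N : Submodule k (R.V s)}
    (hN : N ≠ ⊥) :
    ∃ m ∈ N, m ≠ 0 ∧ ∀ x (h : s ≤ x), R.map h m ≠ 0 → Disjoint (LinearMap.ker (R.map h)) N := by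
  by_cases hdisj : ∀ x : Set.Ici s, Disjoint (LinearMap.ker (R.map x.2)) N
  · obtain ⟨m, hmN, hm⟩ := N.ne_bot_iff.1 hN
    exact ⟨m, hmN, hm, fun x h _ => hdisj ⟨x, h⟩⟩
  · push Not at hdisj
    obtain ⟨z, hz, hmin⟩ := exists_minimalFor_of_wellFoundedLT
      (fun x : Set.Ici s => ¬Disjoint (LinearMap.ker (R.map x.2)) N)
      (fun x => LinearMap.ker (R.map x.2)) hdisj
    obtain ⟨m, ⟨hmz, hmN⟩, hm⟩ := (Submodule.ne_bot_iff _).1 (mt disjoint_iff.2 hz)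
    refine ⟨m, hmN, hm, fun x h hmx => ?_⟩
    by_contra hx
    have hxz : LinearMap.ker (R.map h) ≤ LinearMap.ker (R.map z.2) :=
      (ker_map_total R h z.2).resolve_right fun hle => hmx (hle hmz)
    exact hmx (hmin (j := ⟨x, h⟩) hx hxz hmz)

theorem exists_ker_le_kerOutside {D : Set S} {x z : S} [FiniteDimensional k (R.V x)]
    (hxz : x ≤ z) (hz : z ∉ D) :
    ∃ y, ∃ h : x ≤ y, y ∉ D ∧ LinearMap.ker (R.map h) ≤ (R.kerOutside D).carrier x := by
  obtain ⟨y, hy, hmin⟩ := exists_minimalFor_of_wellFoundedLT (fun y : Set.Ici x => y.1 ∉ D)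
    (fun y => LinearMap.ker (R.map y.2)) ⟨⟨z, hxz⟩, hz⟩
  refine ⟨y, y.2, hy, fun w hw => PersistenceModule.mem_kerOutside.2 fun z' hxz' hz' => ?_⟩
  exact (ker_map_total R y.2 hxz').elim id (hmin (j := ⟨z', hxz'⟩) hz') hw

theorem exists_rangeOutside_le_range {F : Set S} {x z : S} [FiniteDimensional k (R.V z)]
    (hxz : x ≤ z) (hx : x ∉ F) :
    ∃ y, ∃ h : y ≤ z, y ∉ F ∧ (R.rangeOutside F).carrier z ≤ LinearMap.range (R.map h) := by
  obtain ⟨y, hy, hmax⟩ := exists_maximalFor_of_wellFoundedGT (fun y : Set.Iic z => y.1 ∉ F)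
    (fun y => LinearMap.range (R.map y.2)) ⟨⟨x, hxz⟩, hx⟩
  refine ⟨y, y.2, hy, iSup_le fun x' => iSup_le fun hx'z => iSup_le fun hx' => ?_⟩
  exact (range_map_total R hx'z y.2).elim id (hmax (j := ⟨x', hx'z⟩) hx')

theorem exists_ancestral_or_map_eq_zero (R : PersistenceModule k S) (s : S)
    [FiniteDimensional k (R.V s)] :
    (∃ m : R.V s, m ≠ 0 ∧ ∀ x (h : x ≤ s), m ∈ LinearMap.range (R.map h)) ∨
      ∃ x, ∃ h : x ≤ s, R.map h = 0 := by
  obtain ⟨z, -, hmin⟩ := exists_minimalFor_of_wellFoundedLT (fun _ : Set.Iic s => True)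
    (fun x => LinearMap.range (R.map x.2)) ⟨⟨s, le_rfl⟩, trivial⟩
  by_cases hz : R.map z.2 = 0
  · exact Or.inr ⟨z, z.2, hz⟩
  · obtain ⟨m, hmz, hm⟩ := (Submodule.ne_bot_iff _).1 (mt LinearMap.range_eq_bot.1 hz)
    exact Or.inl ⟨m, hm, fun x h =>
      (range_map_total R z.2 h).elim id (hmin (j := ⟨x, h⟩) trivial) hmz⟩

end OneParameter

section TwoParameters

variable {S T : Type}

section Preorder

variable [Preorder S] [Preorder T] {M : PersistenceModule k (S × T)}

/-- The restriction of a two-parameter module to the horizontal line at height `t`. -/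
abbrev PersistenceModule.row (M : PersistenceModule k (S × T)) (t : T) : PersistenceModule k S :=
  M.comap (f := fun s => (s, t)) fun _ _ h => ⟨h, le_rfl⟩

/-- The restriction of a two-parameter module to the vertical line over `s`. -/
abbrev PersistenceModule.col (M : PersistenceModule k (S × T)) (s : S) : PersistenceModule k T :=
  M.comap (f := fun t => (s, t)) fun _ _ h => ⟨le_rfl, h⟩

/-- The two-parameter module with its parameters exchanged. -/
abbrev PersistenceModule.transpose (M : PersistenceModule k (S × T)) :
    PersistenceModule k (T × S) :=
  M.comap (OrderIso.prodComm (α := T) (β := S)).monotone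

theorem row_map_col_map {x x' : S} {y y' : T} (hx : x ≤ x') (hy : y ≤ y') (m : M.V (x, y)) :
    (M.row y').map hx ((M.col x).map hy m) = (M.col x').map hy ((M.row y).map hx m) := by
  rw [M.map_map, M.map_map]

theorem map_eq_row_map_col_map {x x' : S} {y y' : T} (hx : x ≤ x') (hy : y ≤ y')
    (m : M.V (x, y)) : M.map ⟨hx, hy⟩ m = (M.row y').map hx ((M.col x).map hy m) := by
  rw [M.map_map]

theorem mem_kerOutside_prod {D : Set S} {E : Set T} {x : S} {y : T} {w : M.V (x, y)} :
    w ∈ (M.kerOutside (D ×ˢ E)).carrier (x, y) ↔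
      w ∈ ((M.row y).kerOutside D).carrier x ∧ w ∈ ((M.col x).kerOutside E).carrier y := by
  simp only [PersistenceModule.mem_kerOutside]
  constructor
  · exact fun h => ⟨fun z hz hzD => h (z, y) ⟨hz, le_rfl⟩ fun hz => hzD hz.1,
      fun z hz hzE => h (x, z) ⟨le_rfl, hz⟩ fun hz => hzE hz.2⟩
  · rintro ⟨hD, hE⟩ ⟨a, b⟩ ⟨hxa, hyb⟩ hab
    rw [map_eq_row_map_col_map hxa hyb]
    by_cases ha : a ∈ D
    · rw [hE b hyb fun hb => hab ⟨ha, hb⟩, map_zero]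
    · rw [row_map_col_map, hD a hxa ha, map_zero]

theorem MiddleExact.transpose (hM : MiddleExact M) : MiddleExact M.transpose :=
  fun x x' y y' hx hy mb mc h =>
    let ⟨ma, hb, hc⟩ := hM y y' x x' hy hx mc mb h.symm
    ⟨ma, hc, hb⟩

theorem MiddleExact.exists_lift (hM : MiddleExact M) {x x' : S} {y y' : T} (hx : x ≤ x')
    (hy : y ≤ y') {b : M.V (x, y')} {c : M.V (x', y)}
    (h : (M.row y').map hx b = (M.col x').map hy c) :
    ∃ a : M.V (x, y), (M.col x).map hy a = b ∧ (M.row y).map hx a = c :=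
  hM x x' y y' hx hy b c h

theorem IsIdeal.prod {A : Set S} {B : Set T} (hA : IsIdeal A) (hB : IsIdeal B) :
    IsIdeal (A ×ˢ B) := fun p q h hq => ⟨hA p.1 q.1 h.1 hq.1, hB p.2 q.2 h.2 hq.2⟩

theorem MiddleExact.ker_map_le (hM : MiddleExact M) {x x' : S} {y y' : T} (hx : x ≤ x')
    (hy : y ≤ y') :
    LinearMap.ker (M.map (show (x, y) ≤ (x', y') from ⟨hx, hy⟩)) ≤
      LinearMap.ker ((M.row y).map hx) ⊔ LinearMap.ker ((M.col x).map hy) := by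
  intro m hm
  rw [LinearMap.mem_ker, map_eq_row_map_col_map hx hy] at hm
  obtain ⟨a, ha_col, ha_row⟩ := hM.exists_lift hx hy (b := (M.col x).map hy m) (c := 0) <| by
    rw [hm, map_zero]
  have m_sub_a : m - a ∈ LinearMap.ker ((M.col x).map hy) := by
    rw [LinearMap.mem_ker, map_sub, ha_col, sub_self]
  exact Submodule.mem_sup.2 ⟨a, ha_row, m - a, m_sub_a, add_sub_cancel a m⟩

theorem MiddleExact.map_ne_zero_of_disjoint (hM : MiddleExact M) {s x s' : S} {t y t' : T}
    (hx : s ≤ x) (hxs' : x ≤ s') (hy : t ≤ y) (hyt' : y ≤ t') {m : M.V (s, t)}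
    (hm : (M.col s).map (hy.trans hyt') m = 0) (hmy : (M.col s).map hy m ≠ 0)
    (hdisj : Disjoint (LinearMap.ker ((M.row t).map hx))
      (LinearMap.ker ((M.row t).map (hx.trans hxs')) ⊓
        LinearMap.ker ((M.col s).map (hy.trans hyt')))) :
    M.map (show (s, t) ≤ (x, y) from ⟨hx, hy⟩) m ≠ 0 := by
  intro hmap
  obtain ⟨a, ha, b, hb, rfl⟩ := Submodule.mem_sup.1 (hM.ker_map_le hx hy hmap)
  have ha_row : a ∈ LinearMap.ker ((M.row t).map (hx.trans hxs')) :=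
    PersistenceModule.ker_map_mono hx hxs' ha
  have ha_col : a ∈ LinearMap.ker ((M.col s).map (hy.trans hyt')) :=
    (Submodule.add_mem_iff_left _ (PersistenceModule.ker_map_mono (R := M.col s) hy hyt' hb)).1 hm
  have a_eq_zero : a = 0 := Submodule.disjoint_def.1 hdisj a ha ⟨ha_row, ha_col⟩
  rw [a_eq_zero, zero_add] at hmy
  exact hmy hb

/-- `Sᵒᵈ × Tᵒᵈ` is the opposite of `S × T`. -/
def prodDualIso (S T : Type) [LE S] [LE T] : Sᵒᵈ × Tᵒᵈ ≃o (S × T)ᵒᵈ where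
  toFun p := OrderDual.toDual (OrderDual.ofDual p.1, OrderDual.ofDual p.2)
  invFun p := (OrderDual.toDual (OrderDual.ofDual p).1, OrderDual.toDual (OrderDual.ofDual p).2)
  left_inv _ := rfl
  right_inv _ := rfl
  map_rel_iff' := Iff.rfl

theorem MiddleExact.exists_functional (hM : MiddleExact M) {x x' : S} {y y' : T} (hx : x ≤ x')
    (hy : y ≤ y') {f : Module.Dual k (M.V (x', y))} {g : Module.Dual k (M.V (x, y'))}
    (hfg : f ∘ₗ (M.row y).map hx = g ∘ₗ (M.col x).map hy) :
    ∃ φ : Module.Dual k (M.V (x', y')),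
      φ ∘ₗ (M.col x').map hy = f ∧ φ ∘ₗ (M.row y').map hx = g := by
  obtain ⟨φ, hφ⟩ : f.coprod g ∈
      LinearMap.range (((M.col x').map hy).coprod ((M.row y').map hx)).dualMap := by
    rw [LinearMap.range_dualMap_eq_dualAnnihilator_ker, Submodule.mem_dualAnnihilator]
    rintro ⟨c, b⟩ hcb
    rw [LinearMap.mem_ker, LinearMap.coprod_apply, add_comm, ← neg_eq_iff_add_eq_zero, ← map_neg]
      at hcb
    obtain ⟨a, hab, hac⟩ := hM.exists_lift hx hy hcb
    rw [LinearMap.coprod_apply, ← hac, ← LinearMap.comp_apply, hfg, LinearMap.comp_apply, hab,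
      map_neg, neg_add_cancel]
  exact ⟨φ, LinearMap.ext fun c => by simpa using LinearMap.congr_fun hφ (c, 0),
    LinearMap.ext fun b => by simpa using LinearMap.congr_fun hφ (0, b)⟩

theorem MiddleExact.dual (hM : MiddleExact M) :
    MiddleExact (M.dual.comap (prodDualIso S T).monotone) := fun _ _ _ _ hx hy _ _ h =>
  let ⟨φ, hcol, hrow⟩ := hM.exists_functional (OrderDual.ofDual_le_ofDual.2 hx)
    (OrderDual.ofDual_le_ofDual.2 hy) h
  ⟨φ, hcol, hrow⟩

theorem rangeOutside_prod_univ_le {F : Set S} {x : S} {y : T} :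
    (M.rangeOutside (F ×ˢ Set.univ)).carrier (x, y) ≤ ((M.row y).rangeOutside F).carrier x := by
  refine iSup_le fun ⟨a, b⟩ => iSup_le fun h => iSup_le fun ha => ?_
  rintro _ ⟨w, rfl⟩
  rw [map_eq_row_map_col_map h.1 h.2]
  exact PersistenceModule.map_mem_rangeOutside (M := M.row y) h.1 (fun haF => ha ⟨haF, trivial⟩) _

theorem MiddleExact.ker_row_map_eq_bot (hM : MiddleExact M) {x x' : S} (hx : x ≤ x') {y y' : T}
    (hy : y ≤ y') (h : LinearMap.ker ((M.row y).map hx) = ⊥) :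
    LinearMap.ker ((M.row y').map hx) = ⊥ := by
  refine (Submodule.eq_bot_iff _).2 fun b hb => ?_
  obtain ⟨a, rfl, ha⟩ := hM.exists_lift hx hy (b := b) (c := 0) <| by
    rw [LinearMap.mem_ker.1 hb, map_zero]
  rw [(Submodule.eq_bot_iff _).1 h a ha, map_zero]

end Preorder

variable [LinearOrder S] [LinearOrder T] {M : PersistenceModule k (S × T)}

theorem MiddleExact.exists_lift_kerOutside_row (hM : MiddleExact M)
    [∀ p, FiniteDimensional k (M.V p)] {D : Set S} {x z : S} (hxz : x ≤ z) (hz : z ∉ D) {y y' : T}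
    (hy : y ≤ y') {b : M.V (x, y')} (hb : b ∈ ((M.row y').kerOutside D).carrier x) :
    ∃ a ∈ ((M.row y).kerOutside D).carrier x, (M.col x).map hy a = b := by
  obtain ⟨z', hxz', hz', hker⟩ := exists_ker_le_kerOutside (R := M.row y) hxz hz
  obtain ⟨a, hab, ha⟩ := hM.exists_lift hxz' hy (b := b) (c := 0) <| by
    rw [PersistenceModule.mem_kerOutside.1 hb z' hxz' hz', map_zero]
  exact ⟨a, hker ha, hab⟩

theorem MiddleExact.exists_lift_kerOutside_col (hM : MiddleExact M)
    [∀ p, FiniteDimensional k (M.V p)] {E : Set T} {y z : T} (hyz : y ≤ z) (hz : z ∉ E) {x x' : S}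
    (hx : x ≤ x') {c : M.V (x', y)} (hc : c ∈ ((M.col x').kerOutside E).carrier y) :
    ∃ a ∈ ((M.col x).kerOutside E).carrier y, (M.row y).map hx a = c :=
  hM.transpose.exists_lift_kerOutside_row hyz hz hx hc

theorem directedOn_le_prod (A : Set S) (B : Set T) : DirectedOn (· ≤ ·) (A ×ˢ B) :=
  (Std.Total.directedOn A).prod (Std.Total.directedOn B)

theorem directedOn_ge_prod (A : Set S) (B : Set T) : DirectedOn (· ≥ ·) (A ×ˢ B) :=
  (Std.Total.directedOn (r := (· ≥ ·)) A).prod (Std.Total.directedOn (r := (· ≥ ·)) B)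

end TwoParameters

section BlockSummands

variable {S T : Type} [LinearOrder S] [LinearOrder T] {M : PersistenceModule k (S × T)}

/-- `M` has a direct summand isomorphic to the block module of some block. -/
def HasBlockSummand (M : PersistenceModule k (S × T)) : Prop :=
  ∃ J, IsBlock J ∧ HasIntervalSummand M J

theorem MiddleExact.exists_lift_kerOutside_prod (hM : MiddleExact M)
    [∀ p, FiniteDimensional k (M.V p)] {A : Set S} {B : Set T} (hA : IsIdeal A) (hB : IsIdeal B)
    {s s' : S} {t t' : T} (hs : s ≤ s') (ht : t ≤ t') (hsA : s ∈ A) (htB : t ∈ B) (hs'A : s' ∉ A)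
    (ht'B : t' ∉ B) {m : M.V (s, t)} (hm_row : m ∈ ((M.row t).kerOutside A).carrier s)
    (hm_col : m ∈ ((M.col s).kerOutside B).carrier t) {x : S} {y : T} (hx : x ≤ s) (hy : y ≤ t) :
    ∃ u ∈ (M.kerOutside (A ×ˢ B)).carrier (x, y), M.map ⟨hx, hy⟩ u = m := by
  obtain ⟨w, hwB, hwm⟩ := hM.exists_lift_kerOutside_col ht ht'B hx hm_col
  have hwA : w ∈ ((M.row t).kerOutside A).carrier x :=
    mem_kerOutside_of_map_mem hA hsA hx (hwm ▸ hm_row)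
  obtain ⟨u, huA, huw⟩ := hM.exists_lift_kerOutside_row (hx.trans hs) hs'A hy hwA
  have huB : u ∈ ((M.col x).kerOutside B).carrier y :=
    mem_kerOutside_of_map_mem hB htB hy (huw ▸ hwB)
  exact ⟨u, mem_kerOutside_prod.2 ⟨huA, huB⟩, by rw [map_eq_row_map_col_map hx hy, huw, hwm]⟩

theorem MiddleExact.exists_hasIntervalSummand_ideal (hM : MiddleExact M)
    [∀ p, FiniteDimensional k (M.V p)] {s s' : S} {t t' : T} (hs : s ≤ s') (ht : t ≤ t')
    {m₀ : M.V (s, t)} (hm₀ : m₀ ≠ 0) (hrow : (M.row t).map hs m₀ = 0)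
    (hcol : (M.col s).map ht m₀ = 0) :
    ∃ (A : Set S) (B : Set T), A.Nonempty ∧ B.Nonempty ∧ IsIdeal A ∧ IsIdeal B ∧
      HasIntervalSummand M (A ×ˢ B) := by
  let N := LinearMap.ker ((M.row t).map hs) ⊓ LinearMap.ker ((M.col s).map ht)
  obtain ⟨m, ⟨hm_row, hm_col⟩, hm, hdisj⟩ :=
    exists_shortestLived (R := M.row t) (N.ne_bot_iff.2 ⟨m₀, ⟨hrow, hcol⟩, hm₀⟩)
  let A := (M.row t).lifespan m
  let B := (M.col s).lifespan m
  have hA : IsIdeal A := isIdeal_lifespan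
  have hB : IsIdeal B := isIdeal_lifespan
  have hsA : s ∈ A := self_mem_lifespan hm
  have htB : t ∈ B := self_mem_lifespan hm
  have hs'A : s' ∉ A := notMem_lifespan_iff.2 ⟨hs, hm_row⟩
  have ht'B : t' ∉ B := notMem_lifespan_iff.2 ⟨ht, hm_col⟩
  refine ⟨A, B, ⟨s, hsA⟩, ⟨t, htB⟩, hA, hB, ?_⟩
  rw [← Set.univ_inter (A ×ˢ B)]
  refine hasIntervalSummand_inter (hA.prod hB) (fun _ _ _ _ => trivial) (directedOn_le_prod A B)
    (Set.univ_prod_univ ▸ directedOn_ge_prod _ _) trivial ⟨hsA, htB⟩ (m := m) ?_ ?_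
  · exact fun _ h _ => hM.exists_lift_kerOutside_prod hA hB hs ht hsA htB hs'A ht'B
      mem_kerOutside_lifespan mem_kerOutside_lifespan h.1 h.2
  · rintro ⟨x, y⟩ ⟨hx, hy⟩ ⟨hxA, hyB⟩
    have hxs' : x ≤ s' := le_of_not_ge fun h => hs'A (hA s' x h hxA)
    have hyt' : y ≤ t' := le_of_not_ge fun h => ht'B (hB t' y h hyB)
    rw [rangeOutside_univ]
    exact hM.map_ne_zero_of_disjoint hx hxs' hy hyt' hm_col (hyB hy) (hdisj x hx (hxA hx))

theorem MiddleExact.exists_hasIntervalSummand_filter (hM : MiddleExact M)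
    [∀ p, FiniteDimensional k (M.V p)] {s s' : S} {t t' : T} (hs : s' ≤ s) (ht : t' ≤ t)
    {m : M.V (s, t)} (hm : m ≠ 0) (hrow : (M.row t).map hs = 0) (hcol : (M.col s).map ht = 0) :
    ∃ (A : Set S) (B : Set T), A.Nonempty ∧ B.Nonempty ∧ IsFilter A ∧ IsFilter B ∧
      HasIntervalSummand M (A ×ˢ B) := by
  obtain ⟨f, hf⟩ := Module.Projective.exists_dual_eq_one k hm
  have (p : Sᵒᵈ × Tᵒᵈ) :
      FiniteDimensional k ((M.dual.comap (prodDualIso S T).monotone).V p) :=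
    inferInstanceAs (FiniteDimensional k (Module.Dual k (M.V _)))
  obtain ⟨A, B, hA_ne, hB_ne, hA, hB, hAB⟩ := hM.dual.exists_hasIntervalSummand_ideal
    (OrderDual.toDual_le_toDual.2 hs) (OrderDual.toDual_le_toDual.2 ht) (m₀ := f)
    (fun hf0 => zero_ne_one ((LinearMap.congr_fun hf0 m).symm.trans hf))
    ((congrArg (f ∘ₗ ·) hrow).trans (LinearMap.comp_zero f))
    ((congrArg (f ∘ₗ ·) hcol).trans (LinearMap.comp_zero f))
  exact ⟨OrderDual.toDual ⁻¹' A, OrderDual.toDual ⁻¹' B, hA_ne, hB_ne,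
    fun x y h hx => hA _ _ h hx, fun x y h hx => hB _ _ h hx, (hAB.of_comap _).of_dual⟩

theorem MiddleExact.exists_lift_kerOutside_lifespan (hM : MiddleExact M)
    [∀ p, FiniteDimensional k (M.V p)] {s x : S} {t y : T} (hx : x ≤ s) (hy : y ≤ t)
    {m : M.V (s, t)} (hm : m ≠ 0) (hmx : m ∈ LinearMap.range ((M.row t).map hx))
    (hmy : m ∈ LinearMap.range ((M.col s).map hy)) :
    ∃ w ∈ ((M.row y).kerOutside ((M.row t).lifespan m)).carrier x, M.map ⟨hx, hy⟩ w = m := by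
  obtain ⟨f, hf⟩ := hmx
  by_cases hD : (M.row t).lifespan m = Set.univ
  · obtain ⟨e, he⟩ := hmy
    obtain ⟨w, hwf, -⟩ := hM.exists_lift hx hy (hf.trans he.symm)
    refine ⟨w, ?_, by rw [map_eq_row_map_col_map hx hy, hwf, hf]⟩
    exact PersistenceModule.mem_kerOutside.2 fun z _ hz => absurd (hD ▸ trivial) hz
  · obtain ⟨z, hz⟩ := (Set.ne_univ_iff_exists_notMem _).1 hD
    have hf_mem : f ∈ ((M.row t).kerOutside ((M.row t).lifespan m)).carrier x :=
      mem_kerOutside_of_map_mem isIdeal_lifespan (self_mem_lifespan hm) hx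
        (hf ▸ mem_kerOutside_lifespan)
    have hsz : s ≤ z := (notMem_lifespan_iff.1 hz).1
    obtain ⟨w, hw, hwf⟩ := hM.exists_lift_kerOutside_row (hx.trans hsz) hz hy hf_mem
    exact ⟨w, hw, by rw [map_eq_row_map_col_map hx hy, hwf, hf]⟩

theorem MiddleExact.map_notMem_rangeOutside_ancestry (hM : MiddleExact M)
    [∀ p, FiniteDimensional k (M.V p)] {s x : S} {t y : T} (hx : s ≤ x) (hy : t ≤ y)
    {m : M.V (s, t)} (hm : (M.col s).map hy m ≠ 0)
    (hker : LinearMap.ker ((M.row y).map hx) = ⊥) :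
    M.map ⟨hx, hy⟩ m ∉ ((M.row y).rangeOutside ((M.row t).ancestry m)).carrier x := by
  have row_injective : Function.Injective ((M.row y).map hx) := LinearMap.ker_eq_bot.1 hker
  rw [map_eq_row_map_col_map hx hy]
  intro hmem
  by_cases hF : (M.row t).ancestry m = Set.univ
  · rw [hF, rangeOutside_univ] at hmem
    exact hm (row_injective (hmem.trans (map_zero _).symm))
  · obtain ⟨z, hz⟩ := (Set.ne_univ_iff_exists_notMem _).1 hF
    have hzs : z ≤ s := (notMem_ancestry_iff.1 hz).1
    obtain ⟨z', hz'x, hz', hle⟩ := exists_rangeOutside_le_range (R := M.row y) (hzs.trans hx) hz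
    obtain ⟨a, ha⟩ := hle hmem
    obtain ⟨hz's, hmz'⟩ := notMem_ancestry_iff.1 hz'
    have ha' : (M.row y).map hz's a = (M.col s).map hy m := row_injective <| by
      rw [(M.row y).map_map, ha]
    obtain ⟨b, -, hb⟩ := hM.exists_lift hz's hy ha'
    exact hmz' ⟨b, hb⟩

theorem MiddleExact.exists_hasIntervalSummand_band (hM : MiddleExact M)
    [∀ p, FiniteDimensional k (M.V p)] {s : S} {t : T} {m : M.V (s, t)} (hm : m ≠ 0)
    (shortest : ∀ x (h : s ≤ x), (M.row t).map h m ≠ 0 → LinearMap.ker ((M.row t).map h) = ⊥)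
    (immortal : ∀ y (h : t ≤ y), (M.col s).map h m ≠ 0)
    (ancestral : ∀ y (h : y ≤ t), m ∈ LinearMap.range ((M.col s).map h)) :
    ∃ A : Set S, IsIntervalLin A ∧ HasIntervalSummand M (A ×ˢ Set.univ) := by
  let D := (M.row t).lifespan m
  let F := (M.row t).ancestry m
  have hD : IsIdeal D := isIdeal_lifespan
  have hF : IsFilter F := isFilter_ancestry
  have hsD : s ∈ D := self_mem_lifespan hm
  have hsF : s ∈ F := self_mem_ancestry
  refine ⟨F ∩ D, ⟨⟨s, hsF, hsD⟩, fun x y z hxy hyz hx hz => ⟨hF x y hxy hx.1, hD y z hyz hz.2⟩⟩, ?_⟩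
  rw [Set.inter_prod]
  refine hasIntervalSummand_inter (p := (s, t)) (m := m)
    (hD.prod fun _ _ _ _ => trivial) (fun p q h hp => ⟨hF p.1 q.1 h.1 hp.1, trivial⟩)
    (directedOn_le_prod _ _) (directedOn_ge_prod _ _) ⟨hsF, trivial⟩ ⟨hsD, trivial⟩ ?_ ?_
  · rintro ⟨x, y⟩ ⟨hx, hy⟩ ⟨hxF, -⟩
    obtain ⟨w, hw, hwm⟩ := hM.exists_lift_kerOutside_lifespan hx hy hm (hxF hx) (ancestral y hy)
    exact ⟨w, mem_kerOutside_prod.2 ⟨hw, PersistenceModule.mem_kerOutside.2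
      fun _ _ hz => absurd trivial hz⟩, hwm⟩
  · rintro ⟨x, y⟩ ⟨hx, hy⟩ ⟨hxD, -⟩ hmem
    exact hM.map_notMem_rangeOutside_ancestry hx hy (immortal y hy)
      (hM.ker_row_map_eq_bot hx hy (shortest x hx (hxD hx))) (rangeOutside_prod_univ_le hmem)

theorem IsBlock.preimage_swap {J : Set (T × S)} (hJ : IsBlock J) :
    IsBlock (Prod.swap ⁻¹' J : Set (S × T)) := by
  obtain ⟨hJ_ne, hJ⟩ := hJ
  refine ⟨hJ_ne.preimage Prod.swap_surjective, ?_⟩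
  obtain ⟨A, B, hA, hA', hB, hB', rfl⟩ | ⟨A, B, hA, hA', hB, hB', rfl⟩ | ⟨A, hA, rfl⟩ |
    ⟨B, hB, rfl⟩ := hJ <;> rw [Set.preimage_swap_prod]
  · exact Or.inl ⟨B, A, hB, hB', hA, hA', rfl⟩
  · exact Or.inr (Or.inl ⟨B, A, hB, hB', hA, hA', rfl⟩)
  · exact Or.inr (Or.inr (Or.inr ⟨A, hA, rfl⟩))
  · exact Or.inr (Or.inr (Or.inl ⟨B, hB, rfl⟩))

theorem HasBlockSummand.of_transpose (h : HasBlockSummand M.transpose) : HasBlockSummand M := by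
  obtain ⟨J, hJ, hMJ⟩ := h
  exact ⟨_, hJ.preimage_swap, hMJ.of_comap (N := M) (OrderIso.prodComm (α := T) (β := S))⟩

theorem MiddleExact.hasBlockSummand_of_band (hM : MiddleExact M)
    [∀ p, FiniteDimensional k (M.V p)] {s : S} {t : T} {m : M.V (s, t)} (hm : m ≠ 0)
    (shortest : ∀ x (h : s ≤ x), (M.row t).map h m ≠ 0 → LinearMap.ker ((M.row t).map h) = ⊥)
    (immortal : ∀ y (h : t ≤ y), (M.col s).map h m ≠ 0)
    (ancestral : ∀ y (h : y ≤ t), m ∈ LinearMap.range ((M.col s).map h)) : HasBlockSummand M := by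
  obtain ⟨A, hA, hMA⟩ := hM.exists_hasIntervalSummand_band hm shortest immortal ancestral
  exact ⟨_, ⟨hA.1.prod ⟨t, Set.mem_univ t⟩, Or.inr (Or.inr (Or.inl ⟨A, hA, rfl⟩))⟩, hMA⟩

theorem MiddleExact.hasBlockSummand_of_row_map_eq_zero (hM : MiddleExact M)
    [∀ p, FiniteDimensional k (M.V p)] {s s' : S} {t : T} (hs : s ≤ s') {m₀ : M.V (s, t)}
    (hm₀ : m₀ ≠ 0) (hrow : (M.row t).map hs m₀ = 0) : HasBlockSummand M := by
  by_cases hcol : ∃ m ≠ 0, ∃ t', ∃ ht : t ≤ t', (M.row t).map hs m = 0 ∧ (M.col s).map ht m = 0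
  · obtain ⟨m, hm, t', ht, hms, hmt⟩ := hcol
    obtain ⟨A, B, hA_ne, hB_ne, hA, hB, hAB⟩ :=
      hM.exists_hasIntervalSummand_ideal hs ht hm hms hmt
    exact ⟨A ×ˢ B, ⟨hA_ne.prod hB_ne, Or.inl
      ⟨A, B, ⟨hA_ne, hA.isConvex⟩, hA, ⟨hB_ne, hB.isConvex⟩, hB, rfl⟩⟩, hAB⟩
  · push Not at hcol
    obtain ⟨m, -, hm, hshort⟩ := exists_shortestLived (R := M.row t) (s := s)
      ((Submodule.ne_bot_iff ⊤).2 ⟨m₀, trivial, hm₀⟩)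
    have shortest (x) (h : s ≤ x) (hmx : (M.row t).map h m ≠ 0) :
        LinearMap.ker ((M.row t).map h) = ⊥ := disjoint_top.1 (hshort x h hmx)
    have hms : (M.row t).map hs m = 0 := by
      by_contra hms
      exact hm₀ (LinearMap.ker_eq_bot'.1 (shortest s' hs hms) m₀ hrow)
    refine hM.hasBlockSummand_of_band hm shortest (fun y h => hcol m hm y h hms) fun y h => ?_
    obtain ⟨a, ha, -⟩ := hM.exists_lift hs h (b := m) (c := 0) (hms.trans (map_zero _).symm)
    exact ⟨a, ha⟩

theorem MiddleExact.hasBlockSummand (hM : MiddleExact M) [∀ p, FiniteDimensional k (M.V p)]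
    {s : S} {t : T} {m₀ : M.V (s, t)} (hm₀ : m₀ ≠ 0) : HasBlockSummand M := by
  have (p : T × S) : FiniteDimensional k (M.transpose.V p) :=
    inferInstanceAs (FiniteDimensional k (M.V _))
  by_cases hrow : ∃ m ≠ 0, ∃ x, ∃ h : s ≤ x, (M.row t).map h m = 0
  · obtain ⟨m, hm, x, h, hmx⟩ := hrow
    exact hM.hasBlockSummand_of_row_map_eq_zero h hm hmx
  by_cases hcol : ∃ m ≠ 0, ∃ y, ∃ h : t ≤ y, (M.col s).map h m = 0
  · obtain ⟨m, hm, y, h, hmy⟩ := hcol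
    exact (hM.transpose.hasBlockSummand_of_row_map_eq_zero h hm hmy).of_transpose
  push Not at hrow hcol
  have row_ker (x) (h : s ≤ x) : LinearMap.ker ((M.row t).map h) = ⊥ :=
    LinearMap.ker_eq_bot'.2 fun m => not_imp_not.1 fun hm => hrow m hm x h
  have col_ker (y) (h : t ≤ y) : LinearMap.ker ((M.col s).map h) = ⊥ :=
    LinearMap.ker_eq_bot'.2 fun m => not_imp_not.1 fun hm => hcol m hm y h
  obtain ⟨m, hm, hmy⟩ | ⟨t', ht, hcol_zero⟩ := exists_ancestral_or_map_eq_zero (M.col s) t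
  · exact hM.hasBlockSummand_of_band hm (fun x h _ => row_ker x h) (hcol m hm) hmy
  obtain ⟨m, hm, hmx⟩ | ⟨s', hs, hrow_zero⟩ := exists_ancestral_or_map_eq_zero (M.row t) s
  · exact (hM.transpose.hasBlockSummand_of_band hm (fun y h _ => col_ker y h) (hrow m hm)
      hmx).of_transpose
  obtain ⟨A, B, hA_ne, hB_ne, hA, hB, hAB⟩ :=
    hM.exists_hasIntervalSummand_filter hs ht hm₀ hrow_zero hcol_zero
  exact ⟨A ×ˢ B, ⟨hA_ne.prod hB_ne, Or.inr (Or.inl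
    ⟨A, B, ⟨hA_ne, hA.isConvex⟩, hA, ⟨hB_ne, hB.isConvex⟩, hB, rfl⟩)⟩, hAB⟩

end BlockSummands

section PartialDecompositions

theorem isCompl_iSup_iInf_of_wellFoundedLT {α ι : Type*} [CompleteLattice α]
    [IsCompactlyGenerated α] [WellFoundedLT α] [Preorder ι] [IsDirectedOrder ι] [Nonempty ι]
    {A N : ι → α} (hA : Monotone A) (hN : Antitone N) (h : ∀ i, IsCompl (A i) (N i)) :
    IsCompl (⨆ i, A i) (⨅ i, N i) := by
  obtain ⟨i, hi⟩ := exists_minimalFor_of_wellFoundedLT (fun _ : ι => True) N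
    ⟨Classical.arbitrary ι, trivial⟩
  have N_le (j : ι) : N i ≤ N j := by
    obtain ⟨l, hil, hjl⟩ := exists_ge_ge i j
    exact (hi.2 trivial (hN hil)).trans (hN hjl)
  have iInf_eq : ⨅ j, N j = N i := le_antisymm (iInf_le N i) (le_iInf N_le)
  rw [iInf_eq]
  refine ⟨?_, (h i).codisjoint.mono_left (le_iSup A i)⟩
  rw [hA.directed_le.disjoint_iSup_left]
  exact fun j => (h j).disjoint.mono_right (N_le j)

theorem isCompl_sup_map_of_isCompl_range {V W : Type*} [AddCommGroup V] [Module k V]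
    [AddCommGroup W] [Module k W] {f : W →ₗ[k] V} (hf : Function.Injective f) {A : Submodule k V}
    (hA : IsCompl A (LinearMap.range f)) {B K : Submodule k W} (hBK : IsCompl B K) :
    IsCompl (A ⊔ B.map f) (K.map f) := by
  refine Disjoint.isCompl_sup_left_of_isCompl_sup_right
    (Submodule.disjoint_map hf hBK.disjoint) ?_
  rwa [← Submodule.map_sup, hBK.sup_eq_top, Submodule.map_top]

theorem linearIndepOn_insert_support {ι V : Type*} [AddCommGroup V] [Module k V] {f : ι → V}
    {s : Set ι} (hs : LinearIndepOn k f {i | i ∈ s ∧ f i ≠ 0}) {a : ι}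
    (ha : f a ∈ Submodule.span k (f '' s) → f a = 0) :
    LinearIndepOn k f {i | i ∈ insert a s ∧ f i ≠ 0} := by
  by_cases hfa : f a = 0
  · refine hs.mono ?_
    rintro i ⟨rfl | hi, hfi⟩
    exacts [absurd hfa hfi, ⟨hi, hfi⟩]
  · have notMem_span : f a ∉ Submodule.span k (f '' {i | i ∈ s ∧ f i ≠ 0}) := fun h =>
      hfa (ha (Submodule.span_mono (Set.image_mono fun i hi => hi.1) h))
    refine (hs.insert notMem_span).mono ?_
    rintro i ⟨rfl | hi, hfi⟩
    exacts [Set.mem_insert _ _, Set.mem_insert_of_mem _ ⟨hi, hfi⟩]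

variable {P : Type} [Preorder P] {M : PersistenceModule k P}

theorem IsIntervalSplitting.gen_ne_zero_iff {J : Set P} {v : ∀ x, M.V x}
    {φ : ∀ x, Module.Dual k (M.V x)} (h : IsIntervalSplitting M J v φ) {x : P} :
    v x ≠ 0 ↔ x ∈ J := by
  refine ⟨not_imp_comm.1 (h.gen_eq_zero x), fun hx hv => ?_⟩
  have coord_gen : φ x (v x) = 1 := h.coord_gen x hx
  rw [hv, map_zero] at coord_gen
  exact zero_ne_one coord_gen

/-- The complement of the summand `k_J` in an interval splitting: the kernel of the retraction. -/
def IsIntervalSplitting.complement {J : Set P} {v : ∀ x, M.V x} {φ : ∀ x, Module.Dual k (M.V x)}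
    (h : IsIntervalSplitting M J v φ) : PersistenceSubmodule M where
  carrier x := LinearMap.ker (φ x)
  map_mem {x y} hxy w hw := by
    rw [LinearMap.mem_ker] at hw ⊢
    by_cases hy : y ∈ J
    · rw [h.coord_map hxy hy, hw]
    · rw [h.coord_eq_zero y hy, LinearMap.zero_apply]

theorem IsIntervalSplitting.isCompl {J : Set P} {v : ∀ x, M.V x}
    {φ : ∀ x, Module.Dual k (M.V x)} (h : IsIntervalSplitting M J v φ) (x : P) :
    IsCompl (k ∙ v x) (h.complement.carrier x) := by
  by_cases hx : x ∈ J
  · have coord_ne_zero : φ x (v x) ≠ 0 := by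
      rw [h.coord_gen x hx]
      exact one_ne_zero
    have isCoatom_ker : IsCoatom (LinearMap.ker (φ x)) :=
      LinearMap.isCoatom_ker_of_surjective <| LinearMap.surjective fun hφ =>
        coord_ne_zero (LinearMap.congr_fun hφ (v x))
    exact (Submodule.isCompl_span_singleton_of_isCoatom_of_notMem isCoatom_ker coord_ne_zero).symm
  · have complement_eq_top : h.complement.carrier x = ⊤ :=
      LinearMap.ker_eq_top.2 (h.coord_eq_zero x hx)
    rw [h.gen_eq_zero x hx, complement_eq_top, Submodule.span_zero_singleton]
    exact isCompl_bot_top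

/-- A submodule is a direct summand if it has a complementary submodule. -/
def PersistenceSubmodule.IsDirectSummand (N : PersistenceSubmodule M) : Prop :=
  ∃ A : PersistenceSubmodule M, ∀ x, IsCompl (A.carrier x) (N.carrier x)

theorem PersistenceSubmodule.IsDirectSummand.exists_mem_map_eq {N : PersistenceSubmodule M}
    (hN : N.IsDirectSummand) {x : P} (m : M.V x) :
    ∃ n ∈ N.carrier x, ∀ y (h : x ≤ y), M.map h m ∈ N.carrier y → M.map h n = M.map h m := by
  obtain ⟨A, hA⟩ := hN
  obtain ⟨a, ha, n, hn, rfl⟩ := Submodule.mem_sup.1 ((hA x).sup_eq_top ▸ Submodule.mem_top (x := m))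
  refine ⟨n, hn, fun y h hm => ?_⟩
  rw [map_add] at hm ⊢
  have map_a_mem : M.map h a ∈ N.carrier y := (Submodule.add_mem_iff_left _ (N.map_mem h hn)).1 hm
  rw [Submodule.disjoint_def.1 (hA y).disjoint _ (A.map_mem h ha) map_a_mem, zero_add]

/-- The inclusion of a submodule. -/
def PersistenceSubmodule.subtype (N : PersistenceSubmodule M) : Hom N.toModule M where
  app x := (N.carrier x).subtype
  natural _ := rfl

/-- A submodule of a submodule `N` of `M`, regarded as a submodule of `M`. -/
def PersistenceSubmodule.ofToModule (N : PersistenceSubmodule M)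
    (K : PersistenceSubmodule N.toModule) : PersistenceSubmodule M where
  carrier x := (K.carrier x).map (N.subtype.app x)
  map_mem h w hw := by
    obtain ⟨n, hn, rfl⟩ := hw
    exact ⟨N.toModule.map h n, K.map_mem h hn, rfl⟩

/-- An internal decomposition `M = (⨁ k_J) ⊕ rest` with `𝓑 J` for every `J` that occurs. The summand
`k_J` is recorded by its generator `v`, whose support is `J`. -/
structure PartialDecomposition (M : PersistenceModule k P) (𝓑 : Set P → Prop) where
  generators : Set (∀ x, M.V x)
  rest : PersistenceSubmodule M
  support_mem : ∀ v ∈ generators, 𝓑 {x | v x ≠ 0}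
  map_generator : ∀ v ∈ generators, ∀ {x y : P} (h : x ≤ y), v x ≠ 0 → M.map h (v x) = v y
  linearIndepOn : ∀ x, LinearIndepOn k (fun v => v x) {v | v ∈ generators ∧ v x ≠ 0}
  isCompl : ∀ x, IsCompl (Submodule.span k ((fun v => v x) '' generators)) (rest.carrier x)

namespace PartialDecomposition

variable {𝓑 : Set P → Prop}

theorem isDirectSummand_rest (D : PartialDecomposition M 𝓑) : D.rest.IsDirectSummand := by
  refine ⟨⟨fun x => Submodule.span k ((fun v => v x) '' D.generators), fun {x y} h w hw => ?_⟩,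
    D.isCompl⟩
  suffices span_le : Submodule.span k ((fun v => v x) '' D.generators) ≤
      (Submodule.span k ((fun v => v y) '' D.generators)).comap (M.map h) from span_le hw
  rw [Submodule.span_le]
  rintro _ ⟨v, hv, rfl⟩
  by_cases hx : v x = 0
  · simp only [hx, zero_mem, SetLike.mem_coe]
  · rw [SetLike.mem_coe, Submodule.mem_comap, D.map_generator v hv h hx]
    exact Submodule.subset_span ⟨v, hv, rfl⟩

instance : Preorder (PartialDecomposition M 𝓑) :=
  Preorder.lift fun D => (D.generators, OrderDual.toDual D.rest.carrier)

instance : Nonempty (PartialDecomposition M 𝓑) :=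
  ⟨{ generators := ∅
     rest := ⟨fun _ => ⊤, fun _ _ _ => trivial⟩
     support_mem := fun _ hv => hv.elim
     map_generator := fun _ hv => hv.elim
     linearIndepOn := fun x => by simp
     isCompl := fun x => by simpa using isCompl_bot_top }⟩

/-- The limit of a directed system of partial decompositions. Pointwise finite-dimensionality makes
the remainders stabilize at every point. -/
def iSup [∀ x, FiniteDimensional k (M.V x)] {ι : Type} [Preorder ι] [IsDirectedOrder ι]
    [Nonempty ι] (D : ι → PartialDecomposition M 𝓑) (hD : Monotone D) :
    PartialDecomposition M 𝓑 where
  generators := ⋃ i, (D i).generators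
  rest :=
    { carrier := fun x => ⨅ i, (D i).rest.carrier x
      map_mem := fun h w hw => (Submodule.mem_iInf _).2 fun i =>
        (D i).rest.map_mem h ((Submodule.mem_iInf _).1 hw i) }
  support_mem v hv :=
    let ⟨i, hi⟩ := Set.mem_iUnion.1 hv
    (D i).support_mem v hi
  map_generator v hv :=
    let ⟨i, hi⟩ := Set.mem_iUnion.1 hv
    (D i).map_generator v hi
  linearIndepOn x := by
    refine (linearIndepOn_iUnion_of_directed (s := fun i => {v | v ∈ (D i).generators ∧ v x ≠ 0})
      (Monotone.directed_le fun i j hij v hv => ⟨(hD hij).1 hv.1, hv.2⟩)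
      fun i => (D i).linearIndepOn x).mono ?_
    rintro v ⟨hv, hvx⟩
    obtain ⟨i, hi⟩ := Set.mem_iUnion.1 hv
    exact Set.mem_iUnion.2 ⟨i, hi, hvx⟩
  isCompl x := by
    rw [Set.image_iUnion, Submodule.span_iUnion]
    exact isCompl_iSup_iInf_of_wellFoundedLT
      (fun i j hij => Submodule.span_mono (Set.image_mono (hD hij).1))
      (fun i j hij => (hD hij).2 x) fun i => (D i).isCompl x

theorem bddAbove_of_isChain [∀ x, FiniteDimensional k (M.V x)]
    {c : Set (PartialDecomposition M 𝓑)} (hc : IsChain (· ≤ ·) c) (hne : c.Nonempty) :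
    BddAbove c := by
  have : Nonempty c := hne.to_subtype
  have : IsDirectedOrder c := ⟨fun D E => (hc.total D.2 E.2).elim
    (fun h => ⟨E, h, le_rfl⟩) fun h => ⟨D, le_rfl, h⟩⟩
  exact ⟨iSup (fun D : c => D.1) fun _ _ h => h, fun D hD =>
    ⟨Set.subset_iUnion (fun D : c => D.1.generators) ⟨D, hD⟩,
      fun x => iInf_le (fun D : c => D.1.rest.carrier x) ⟨D, hD⟩⟩⟩

/-- Splitting one more interval summand off the remainder. -/
def extend (D : PartialDecomposition M 𝓑) {J : Set P} (hJ : 𝓑 J)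
    {v : ∀ x, D.rest.toModule.V x} {φ : ∀ x, Module.Dual k (D.rest.toModule.V x)}
    (h : IsIntervalSplitting D.rest.toModule J v φ) : PartialDecomposition M 𝓑 where
  generators := insert (fun x => D.rest.subtype.app x (v x)) D.generators
  rest := D.rest.ofToModule h.complement
  support_mem := by
    have support_v : {x | D.rest.subtype.app x (v x) ≠ 0} = J := Set.ext fun x => by
      rw [← h.gen_ne_zero_iff]
      exact not_congr Submodule.coe_eq_zero
    rintro w (rfl | hw)
    · rwa [support_v]
    · exact D.support_mem w hw
  map_generator := by
    rintro w (rfl | hw)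
    · intro x y hxy hx
      have hxJ : x ∈ J := h.gen_ne_zero_iff.1 fun hv => hx (congrArg Subtype.val hv)
      exact congrArg Subtype.val (h.map_gen hxy hxJ)
    · exact D.map_generator w hw
  linearIndepOn x := linearIndepOn_insert_support (D.linearIndepOn x)
    (a := fun x => D.rest.subtype.app x (v x)) fun hv =>
      Submodule.disjoint_def.1 (D.isCompl x).disjoint _ hv (v x).2
  isCompl x := by
    have map_span : (k ∙ v x).map (D.rest.subtype.app x) = k ∙ D.rest.subtype.app x (v x) := by
      rw [Submodule.map_span, Set.image_singleton]
    rw [Set.image_insert_eq, Submodule.span_insert, sup_comm, ← map_span]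
    exact isCompl_sup_map_of_isCompl_range (Submodule.subtype_injective _)
      ((Submodule.range_subtype (D.rest.carrier x)).symm ▸ D.isCompl x) (h.isCompl x)

theorem not_isMax_of_hasIntervalSummand (D : PartialDecomposition M 𝓑) {J : Set P} (hJ : 𝓑 J)
    (hne : J.Nonempty) (h : HasIntervalSummand D.rest.toModule J) : ¬ IsMax D := by
  obtain ⟨v, φ, hvφ⟩ := h
  intro hD
  obtain ⟨x, hx⟩ := hne
  have le_extend : D ≤ D.extend hJ hvφ :=
    ⟨Set.subset_insert _ _, fun x => Submodule.map_subtype_le (D.rest.carrier x) _⟩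
  obtain ⟨n, hn, hnv⟩ := (hD le_extend).2 x (v x).2
  have coord_eq_zero : φ x (v x) = 0 := (Subtype.ext hnv : n = v x) ▸ hn
  exact one_ne_zero ((hvφ.coord_gen x hx).symm.trans coord_eq_zero)

theorem exists_rest_eq_bot [∀ x, FiniteDimensional k (M.V x)]
    (nonempty_of : ∀ {J}, 𝓑 J → J.Nonempty)
    (exists_summand : ∀ N : PersistenceSubmodule M, N.IsDirectSummand → ∀ x, N.carrier x ≠ ⊥ →
      ∃ J, 𝓑 J ∧ HasIntervalSummand N.toModule J) :
    ∃ D : PartialDecomposition M 𝓑, ∀ x, D.rest.carrier x = ⊥ := by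
  obtain ⟨D, hD⟩ := zorn_le_nonempty fun (c : Set (PartialDecomposition M 𝓑)) hc hne =>
    bddAbove_of_isChain hc hne
  refine ⟨D, fun x => by_contra fun hx => ?_⟩
  obtain ⟨J, hJ, hJD⟩ := exists_summand D.rest D.isDirectSummand_rest x hx
  exact D.not_isMax_of_hasIntervalSummand hJ (nonempty_of hJ) hJD hD

end PartialDecomposition

end PartialDecompositions

section DirectSums

theorem lsum_bijective_of_iSupIndep {ι : Type*} [DecidableEq ι] {V : ι → Type*} {W : Type*}
    [∀ i, AddCommGroup (V i)] [∀ i, Module k (V i)] [AddCommGroup W] [Module k W]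
    {f : ∀ i, V i →ₗ[k] W} (hf : ∀ i, Function.Injective (f i))
    (indep : iSupIndep fun i => LinearMap.range (f i))
    (iSup_range : ⨆ i, LinearMap.range (f i) = ⊤) :
    Function.Bijective (DFinsupp.lsum ℕ f) := by
  let g : (Π₀ i, V i) →ₗ[k] Π₀ i, LinearMap.range (f i) :=
    DFinsupp.mapRange.linearMap fun i => (f i).rangeRestrict
  have lsum_eq : DFinsupp.lsum ℕ f =
      DFinsupp.lsum ℕ (fun i => (LinearMap.range (f i)).subtype) ∘ₗ g :=
    DFinsupp.lhom_ext fun i v => by simp [g]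
  rw [lsum_eq, LinearMap.coe_comp]
  refine ⟨indep.dfinsupp_lsum_injective.comp ?_, ?_⟩
  · exact (DFinsupp.mapRange_injective _ fun _ => map_zero _).2 fun i _ _ h =>
      hf i (congrArg Subtype.val h)
  · refine Function.Surjective.comp (LinearMap.range_eq_top.1 ?_) ?_
    · rw [← Submodule.iSup_eq_range_dfinsupp_lsum, iSup_range]
    · exact (DFinsupp.mapRange_surjective _ fun _ => map_zero _).2 fun i =>
        (f i).surjective_rangeRestrict

variable {P : Type} [Preorder P] {M N : PersistenceModule k P}

theorem Isomorphic.symm (h : Isomorphic M N) : Isomorphic N M := by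
  obtain ⟨f, hf⟩ := h
  let e (x : P) : M.V x ≃ₗ[k] N.V x := LinearEquiv.ofBijective (f.app x) (hf x)
  refine ⟨⟨fun x => (e x).symm, fun {x y} h => LinearMap.ext fun n => ?_⟩,
    fun x => (e x).symm.bijective⟩
  obtain ⟨m, rfl⟩ := (e x).surjective n
  have natural : N.map h (e x m) = e y (M.map h m) := LinearMap.congr_fun (f.natural h) m
  simp only [LinearMap.comp_apply, LinearEquiv.coe_coe, natural, LinearEquiv.symm_apply_apply]

open Classical in
/-- The morphism out of a direct sum induced by morphisms out of the summands. -/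
noncomputable def Hom.desc {ι : Type} {N : ι → PersistenceModule k P} (f : ∀ i, Hom (N i) M) :
    Hom (directSum N) M where
  app x := DFinsupp.lsum ℕ fun i => (f i).app x
  natural {x y} h := DFinsupp.lhom_ext fun i v => by
    have map_single : (directSum N).map h (DFinsupp.single i v) =
        DFinsupp.single i ((N i).map h v) :=
      DFinsupp.mapRange_single (hf := fun i => map_zero ((N i).map h))
    calc
      M.map h (DFinsupp.lsum ℕ (fun i => (f i).app x) (DFinsupp.single i v))
        = M.map h ((f i).app x v) := congrArg _ (DFinsupp.lsum_single ℕ (fun i => (f i).app x) i v)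
      _ = (f i).app y ((N i).map h v) := LinearMap.congr_fun ((f i).natural h) v
      _ = DFinsupp.lsum ℕ (fun i => (f i).app y) (DFinsupp.single i ((N i).map h v)) :=
        (DFinsupp.lsum_single ℕ (fun i => (f i).app y) i ((N i).map h v)).symm
      _ = DFinsupp.lsum ℕ (fun i => (f i).app y) ((directSum N).map h (DFinsupp.single i v)) :=
        congrArg _ map_single.symm

theorem Hom.isIsoHom_desc {ι : Type} {N : ι → PersistenceModule k P} {f : ∀ i, Hom (N i) M}
    (hf : ∀ i x, Function.Injective ((f i).app x))
    (indep : ∀ x, iSupIndep fun i => LinearMap.range ((f i).app x))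
    (iSup_range : ∀ x, ⨆ i, LinearMap.range ((f i).app x) = ⊤) : IsIsoHom (Hom.desc f) := by
  classical
  exact fun x => lsum_bijective_of_iSupIndep (fun i => hf i x) (indep x) (iSup_range x)

/-- The morphism from the interval module on the support of `v` that sends `1` to `v`. -/
noncomputable def Hom.ofGenerator (v : ∀ x, M.V x) (hI : IsConvex {x | v x ≠ 0})
    (hv : ∀ {x y : P} (h : x ≤ y), v x ≠ 0 → M.map h (v x) = v y) :
    Hom (intervalModule k {x | v x ≠ 0} hI) M where
  app x := LinearMap.toSpanSingleton k (M.V x) (v x) ∘ₗ (kMod k {x | v x ≠ 0} x).subtype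
  natural {x y} h := LinearMap.ext fun c : kMod k {x | v x ≠ 0} x => by
    change M.map h ((c : k) • v x) = (intervalMap k _ h c : k) • v y
    rw [map_smul]
    by_cases hx : v x = 0
    · have hc : c = 0 := Subtype.ext (kMod_coe_eq_zero k (not_not_intro hx) c)
      simp only [hc, map_zero, ZeroMemClass.coe_zero, zero_smul]
    · rw [hv h hx]
      by_cases hy : v y = 0
      · rw [hy, smul_zero, smul_zero]
      · simp [intervalMap, hy]

theorem Hom.ofGenerator_injective (v : ∀ x, M.V x) (hI : IsConvex {x | v x ≠ 0})
    (hv : ∀ {x y : P} (h : x ≤ y), v x ≠ 0 → M.map h (v x) = v y) (x : P) :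
    Function.Injective ((Hom.ofGenerator v hI hv).app x) := by
  by_cases hx : v x = 0
  · intro c d _
    exact Subtype.ext <| (kMod_coe_eq_zero k (not_not_intro hx) c).trans
      (kMod_coe_eq_zero k (not_not_intro hx) d).symm
  · exact (smul_left_injective k hx).comp Subtype.val_injective

theorem Hom.range_ofGenerator (v : ∀ x, M.V x) (hI : IsConvex {x | v x ≠ 0})
    (hv : ∀ {x y : P} (h : x ≤ y), v x ≠ 0 → M.map h (v x) = v y) (x : P) :
    LinearMap.range ((Hom.ofGenerator v hI hv).app x) = k ∙ v x := by
  change LinearMap.range (_ ∘ₗ (kMod k {x | v x ≠ 0} x).subtype) = _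
  rw [LinearMap.range_comp, Submodule.range_subtype]
  by_cases hx : v x = 0
  · simp [kMod, hx]
  · simp [kMod, hx, LinearMap.range_toSpanSingleton]

theorem iSupIndep_span_singleton_of_linearIndepOn {ι V : Type*} [AddCommGroup V] [Module k V]
    {f : ι → V} {s : Set ι} (h : LinearIndepOn k f {i | i ∈ s ∧ f i ≠ 0}) :
    iSupIndep fun i : s => k ∙ f i := by
  let e (i : {i : s // k ∙ f i ≠ ⊥}) : {i | i ∈ s ∧ f i ≠ 0} :=
    ⟨i.1.1, i.1.2, fun hi => i.2 (Submodule.span_singleton_eq_bot.2 hi)⟩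
  have e_injective : Function.Injective e := fun a b hab => by
    simpa only [e, Subtype.ext_iff] using hab
  exact iSupIndep_ne_bot.1 (h.comp e e_injective).iSupIndep_span_singleton

theorem PartialDecomposition.isomorphic_directSum {𝓑 : Set P → Prop}
    (convex_of : ∀ {J}, 𝓑 J → IsConvex J) (D : PartialDecomposition M 𝓑)
    (hD : ∀ x, D.rest.carrier x = ⊥) :
    Isomorphic M (directSum fun v : D.generators =>
      intervalModule k {x | v.1 x ≠ 0} (convex_of (D.support_mem v.1 v.2))) := by
  have span_eq_top (x : P) : Submodule.span k ((fun v => v x) '' D.generators) = ⊤ := by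
    rw [← (D.isCompl x).sup_eq_top, hD, sup_bot_eq]
  refine Isomorphic.symm ⟨Hom.desc fun v => Hom.ofGenerator v.1 _ (D.map_generator v.1 v.2),
    Hom.isIsoHom_desc (fun v => Hom.ofGenerator_injective _ _ _) (fun x => ?_) fun x => ?_⟩
  · simpa only [Hom.range_ofGenerator] using
      iSupIndep_span_singleton_of_linearIndepOn (D.linearIndepOn x)
  · simp only [Hom.range_ofGenerator]
    rw [← span_eq_top, Set.image_eq_range, Submodule.span_range_eq_iSup]

end DirectSums

theorem exists_isomorphic_directSum_intervalModule {P : Type} [Preorder P]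
    (M : PersistenceModule k P) [∀ x, FiniteDimensional k (M.V x)] {𝓑 : Set P → Prop}
    (nonempty_of : ∀ {J}, 𝓑 J → J.Nonempty) (convex_of : ∀ {J}, 𝓑 J → IsConvex J)
    (exists_summand : ∀ N : PersistenceSubmodule M, N.IsDirectSummand → ∀ x, N.carrier x ≠ ⊥ →
      ∃ J, 𝓑 J ∧ HasIntervalSummand N.toModule J) :
    ∃ (ι : Type) (I : ι → Set P) (hI : ∀ i, 𝓑 (I i)),
      Isomorphic M (directSum fun i => intervalModule k (I i) (convex_of (hI i))) := by
  obtain ⟨D, hD⟩ := PartialDecomposition.exists_rest_eq_bot nonempty_of exists_summand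
  exact ⟨D.generators, fun v => {x | v.1 x ≠ 0}, fun v => D.support_mem v.1 v.2,
    D.isomorphic_directSum convex_of hD⟩

theorem MiddleExact.toModule_of_isDirectSummand {S T : Type} [Preorder S] [Preorder T]
    {M : PersistenceModule k (S × T)} (hM : MiddleExact M) {N : PersistenceSubmodule M}
    (hN : N.IsDirectSummand) : MiddleExact N.toModule := by
  rintro x x' y y' hx hy ⟨b, hb⟩ ⟨c, hc⟩ hbc
  obtain ⟨m, rfl, rfl⟩ := hM x x' y y' hx hy b c (congrArg Subtype.val hbc)
  obtain ⟨n, hn, hnm⟩ := hN.exists_mem_map_eq m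
  exact ⟨⟨n, hn⟩, Subtype.ext (hnm _ _ hb), Subtype.ext (hnm _ _ hc)⟩

end PMod

open PMod in
/-- Theorem 1.3: pointwise finite-dimensional middle exact persistence modules over a
product of two totally ordered sets decompose into block modules. -/
theorem stmt2 {k : Type} [Field k] {S T : Type} [LinearOrder S] [LinearOrder T]
    (M : PersistenceModule k (S × T)) (hfd : ∀ p, FiniteDimensional k (M.V p))
    (hme : MiddleExact M) :
    ∃ (ι : Type) (I : ι → Set (S × T)) (hI : ∀ i, IsBlock (I i)),
      Isomorphic M (directSum fun i => intervalModule k (I i) (hI i).isConvex) := by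
  refine exists_isomorphic_directSum_intervalModule M And.left IsBlock.isConvex fun N hN p hp => ?_
  obtain ⟨m, hm, hm_ne⟩ := Submodule.exists_mem_ne_zero_of_ne_bot hp
  have (q : S × T) : FiniteDimensional k (N.toModule.V q) :=
    inferInstanceAs (FiniteDimensional k (N.carrier q))
  exact (hme.toModule_of_isDirectSummand hN).hasBlockSummand (m₀ := (⟨m, hm⟩ : N.carrier p))
    fun h => hm_ne (congrArg Subtype.val h)
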